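/- arXiv:2405.00729 — 2 statements merged into one kernel-verified Lean document; each statement's English description precedes it below -/
import Mathlib

section
/- Let (A, {Δ(λ)}) be a split quasi-hereditary algebra over a commutative Noetherian ring R. If M ∈ F(Δ̃) and N ∈ F(∇̃), then DN ⊗_A M is a finitely generated projective R-module and Tor^A_i(DN, M) = 0 for all i > 0. In particular, Hom_A(M, N) is a finitely generated projective R-module. -/
/-! Write `D = Hom_R(-, R)`. If a right `A`-module `X` is projective over `R`, then by tensor-hom
adjunction `X ⊗_A M` is projective over `R` and `Tor^A_i(X, M) = 0` for all `i > 0` as soon as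
`Extⁱ_A(M, Hom_R(X, V)) = 0` for all `R`-modules `V` and all `i > 0`. This condition on `M` passes
to extensions and direct summands, so for `M ∈ F(Δ̃)` and `X = DN` it has to be checked only for
`M = Δ(λ)`, by descending induction on `λ`. In `0 → K → P(λ) → Δ(λ) → 0` the kernel `K` is filtered
by the `Δ(μ) ⊗_R U` with `μ > λ`, so it satisfies the condition and `DN ⊗_A K` is finitely generated
projective over `R`. As `N ≅ DDN`, the vanishing of `Ext¹_A(Δ(λ), N)` says that the `R`-dual of
`DN ⊗_A K → DN ⊗_A P(λ)` is surjective. Hence this map splits, every map `K → Hom_R(DN, V)` extends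
to `P(λ)`, and the condition for `Δ(λ)` follows by dimension shifting.

The class of pairs `(M, N)` for which `Ext¹_A(M, N) = 0` and `Hom_A(M, N)` is finitely generated
projective over `R` is closed under extensions and direct summands in both variables, so it contains
all `M ∈ F(Δ̃)` and `N ∈ F(∇̃)`. It also contains `(A, N)`, since `A` is a direct summand of a sum
of copies of the `P(λ)`, and so `N` itself is finitely generated projective over `R`. -/

open scoped TensorProduct
open CategoryTheory

noncomputable section

section Core

variable (R : Type) [CommRing R] (A : Type) [Ring A] [Algebra R A]

/-- The action of `a : A` on an `A`-module as an `R`-linear endomorphism. -/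
def actL (M : Type) [AddCommGroup M] [Module R M] [Module A M] [IsScalarTower R A M]
    (a : A) : M →ₗ[R] M where
  toFun m := a • m
  map_add' := smul_add a
  map_smul' r m := (smul_comm r a m).symm

/-- The right `A`-module (i.e. `Aᵐᵒᵖ`-module) structure on the `R`-linear dual of a left
`A`-module `M`, given by `(aᵒᵖ • f) m = f (a • m)`. -/
instance dualModule (M : Type) [AddCommGroup M] [Module R M] [Module A M]
    [IsScalarTower R A M] : Module Aᵐᵒᵖ (M →ₗ[R] R) where
  smul a f := f.comp (actL R A M a.unop)
  one_smul f := by ext m; show f ((1 : Aᵐᵒᵖ).unop • m) = f m; simp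
  mul_smul a b f := by
    ext m
    show f ((a * b).unop • m) = f (b.unop • a.unop • m)
    simp [mul_smul]
  smul_zero a := rfl
  smul_add a f g := rfl
  add_smul a b f := by
    ext m
    show f ((a + b).unop • m) = f (a.unop • m) + f (b.unop • m)
    simp [add_smul]
  zero_smul f := by ext m; show f ((0 : Aᵐᵒᵖ).unop • m) = 0; simp

@[simp] lemma dualModule_smul_apply (M : Type) [AddCommGroup M] [Module R M] [Module A M]
    [IsScalarTower R A M] (a : Aᵐᵒᵖ) (f : M →ₗ[R] R) (m : M) :
    (a • f) m = f (a.unop • m) := rfl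

instance dualTower (M : Type) [AddCommGroup M] [Module R M] [Module A M]
    [IsScalarTower R A M] : IsScalarTower R Aᵐᵒᵖ (M →ₗ[R] R) := by
  constructor
  intro r a f
  ext m
  show f ((r • a).unop • m) = r • f (a.unop • m)
  rw [MulOpposite.unop_smul, smul_assoc, map_smul]

/-- The left `A`-module structure on the `R`-linear dual of a right `A`-module
(i.e. an `Aᵐᵒᵖ`-module) `M`, given by `(a • f) m = f (aᵒᵖ • m)`. -/
instance dualModule' (M : Type) [AddCommGroup M] [Module R M] [Module Aᵐᵒᵖ M]
    [IsScalarTower R Aᵐᵒᵖ M] : Module A (M →ₗ[R] R) where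
  smul a f := f.comp (actL R Aᵐᵒᵖ M (MulOpposite.op a))
  one_smul f := by ext m; show f (MulOpposite.op (1 : A) • m) = f m; simp
  mul_smul a b f := by
    ext m
    show f (MulOpposite.op (a * b) • m) = f (MulOpposite.op b • MulOpposite.op a • m)
    rw [MulOpposite.op_mul, mul_smul]
  smul_zero a := rfl
  smul_add a f g := rfl
  add_smul a b f := by
    ext m
    show f (MulOpposite.op (a + b) • m) = f (MulOpposite.op a • m) + f (MulOpposite.op b • m)
    rw [MulOpposite.op_add, add_smul, map_add]
  zero_smul f := by ext m; show f (MulOpposite.op (0 : A) • m) = 0; simp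

@[simp] lemma dualModule'_smul_apply (M : Type) [AddCommGroup M] [Module R M] [Module Aᵐᵒᵖ M]
    [IsScalarTower R Aᵐᵒᵖ M] (a : A) (f : M →ₗ[R] R) (m : M) :
    (a • f) m = f (MulOpposite.op a • m) := rfl

instance dualTower' (M : Type) [AddCommGroup M] [Module R M] [Module Aᵐᵒᵖ M]
    [IsScalarTower R Aᵐᵒᵖ M] : IsScalarTower R A (M →ₗ[R] R) := by
  constructor
  intro r a f
  ext m
  show f (MulOpposite.op (r • a) • m) = r • f (MulOpposite.op a • m)
  rw [MulOpposite.op_smul, smul_assoc, map_smul]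

variable (Λ : Type) [Fintype Λ] [PartialOrder Λ]

/-- Data witnessing that `X` is isomorphic to `Δ(λ) ⊗_R U` for some `λ ∈ S` and some finitely
generated projective `R`-module `U`. -/
structure TensorFactor (Δ : Λ → Type) [∀ l, AddCommGroup (Δ l)] [∀ l, Module R (Δ l)]
    [∀ l, Module A (Δ l)] [∀ l, IsScalarTower R A (Δ l)]
    (S : Set Λ) (X : Type) [AddCommGroup X] [Module A X] : Type 1 where
  lam : Λ
  mem : lam ∈ S
  U : ModuleCat.{0} R
  fin : Module.Finite R U
  proj : Module.Projective R U
  iso : X ≃ₗ[A] (TensorProduct R (Δ lam) U)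

/-- `M` belongs to `F(Δ̃_S)`: it is a finitely generated `A`-module with a finite filtration
whose factors are of the form `Δ(λ) ⊗_R U`, `λ ∈ S`, `U` a finitely generated projective
`R`-module. -/
def InFilt (Δ : Λ → Type) [∀ l, AddCommGroup (Δ l)] [∀ l, Module R (Δ l)]
    [∀ l, Module A (Δ l)] [∀ l, IsScalarTower R A (Δ l)]
    (S : Set Λ) (M : Type) [AddCommGroup M] [Module A M] : Prop :=
  Module.Finite A M ∧
  ∃ (n : ℕ) (c : Fin (n + 1) → Submodule A M), c 0 = ⊥ ∧ c (Fin.last n) = ⊤ ∧ Monotone c ∧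
    ∀ i : Fin n, Nonempty (TensorFactor R A Λ Δ S
      (↥(c i.succ) ⧸ (Submodule.comap (c i.succ).subtype (c i.castSucc))))

/-- Data witnessing that `X` is isomorphic to `F(λ)` for some `λ ∈ S`. -/
structure PlainFactor (F : Λ → Type) [∀ l, AddCommGroup (F l)] [∀ l, Module A (F l)]
    (S : Set Λ) (X : Type) [AddCommGroup X] [Module A X] : Type 1 where
  lam : Λ
  mem : lam ∈ S
  iso : X ≃ₗ[A] F lam

/-- `M` has a finite filtration with factors among the modules `F(λ)`, `λ ∈ S`. -/
def InFiltPlain (F : Λ → Type) [∀ l, AddCommGroup (F l)] [∀ l, Module A (F l)]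
    (S : Set Λ) (M : Type) [AddCommGroup M] [Module A M] : Prop :=
  Module.Finite A M ∧
  ∃ (n : ℕ) (c : Fin (n + 1) → Submodule A M), c 0 = ⊥ ∧ c (Fin.last n) = ⊤ ∧ Monotone c ∧
    ∀ i : Fin n, Nonempty (PlainFactor A Λ F S
      (↥(c i.succ) ⧸ (Submodule.comap (c i.succ).subtype (c i.castSucc))))

/-- `X` is a direct summand of `Y` (as `A`-modules). -/
def IsDirectSummand (X Y : Type) [AddCommGroup X] [Module A X] [AddCommGroup Y]
    [Module A Y] : Prop :=
  ∃ (i : X →ₗ[A] Y) (p : Y →ₗ[A] X), p.comp i = LinearMap.id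

/-- `X` belongs to the additive closure `add T`. -/
def InAdd (T : Type) [AddCommGroup T] [Module A T] (X : Type) [AddCommGroup X]
    [Module A X] : Prop :=
  ∃ n : ℕ, IsDirectSummand A X (Fin n → T)

/-- A split quasi-hereditary structure on the `R`-algebra `A` with standard modules
`Δ(λ)`, `λ ∈ Λ` (following Rouquier's module-theoretic definition). -/
structure SplitQH (Δ : Λ → Type) [∀ l, AddCommGroup (Δ l)] [∀ l, Module R (Δ l)]
    [∀ l, Module A (Δ l)] [∀ l, IsScalarTower R A (Δ l)] : Type 1 where
  algFin : Module.Finite R A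
  algProj : Module.Projective R A
  deltaFinA : ∀ l, Module.Finite A (Δ l)
  deltaFinR : ∀ l, Module.Finite R (Δ l)
  deltaProjR : ∀ l, Module.Projective R (Δ l)
  hom_le : ∀ l m : Λ, (∃ f : Δ l →ₗ[A] Δ m, f ≠ 0) → l ≤ m
  endIso : ∀ l, Nonempty ((Module.End A (Δ l)) ≃ₐ[R] R)
  P : Λ → ModuleCat.{0} A
  P_proj : ∀ l, Module.Projective A (P l)
  P_fin : ∀ l, Module.Finite A (P l)
  epi : ∀ l, (P l : Type) →ₗ[A] Δ l
  epi_surj : ∀ l, Function.Surjective (epi l)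
  ker_filt : ∀ l, InFilt R A Λ Δ {m | l < m} ↥(LinearMap.ker (epi l))
  add_gen : ∀ (Q : ModuleCat.{0} A), Module.Finite A Q → Module.Projective A Q →
    InAdd A (∀ l, (P l : Type)) Q

/-- Vanishing of `Ext^i_A(M, N)` (computed in the abelian category of `A`-modules). -/
def extVanish (M : Type) [AddCommGroup M] [Module A M] (N : Type) [AddCommGroup N]
    [Module A N] (i : ℕ) : Prop :=
  Subsingleton (((Ext ℤ (ModuleCat.{0} A) i).obj
    (Opposite.op (ModuleCat.of A M))).obj (ModuleCat.of A N))

/-- `∇` is a family of costandard modules for the split quasi-hereditary algebra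
`(A, {Δ(λ)})`: the `R`-linear duals `D∇(λ)` make `A^op` split quasi-hereditary (with the same
poset), and the `Ext`-orthogonality relations with the standard modules hold. -/
def IsCostandard (Δ : Λ → Type) [∀ l, AddCommGroup (Δ l)] [∀ l, Module R (Δ l)]
    [∀ l, Module A (Δ l)] [∀ l, IsScalarTower R A (Δ l)]
    (N : Λ → Type) [∀ l, AddCommGroup (N l)] [∀ l, Module R (N l)]
    [∀ l, Module A (N l)] [∀ l, IsScalarTower R A (N l)] : Prop :=
  Nonempty (SplitQH R Aᵐᵒᵖ Λ (fun l => (N l →ₗ[R] R))) ∧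
  (∀ l, Nonempty ((Δ l →ₗ[A] N l) ≃ₗ[R] R)) ∧
  (∀ l m, l ≠ m → ∀ f : Δ l →ₗ[A] N m, f = 0) ∧
  (∀ l m : Λ, ∀ i : ℕ, 0 < i → extVanish A (Δ l) (N m) i)

/-- A bundled family of costandard modules. -/
structure CostandardFamily (Δ : Λ → Type) [∀ l, AddCommGroup (Δ l)] [∀ l, Module R (Δ l)]
    [∀ l, Module A (Δ l)] [∀ l, IsScalarTower R A (Δ l)] : Type 1 where
  Nab : Λ → Type
  [acg : ∀ l, AddCommGroup (Nab l)]
  [modR : ∀ l, Module R (Nab l)]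
  [modA : ∀ l, Module A (Nab l)]
  [tower : ∀ l, IsScalarTower R A (Nab l)]
  cost : IsCostandard R A Λ Δ Nab

attribute [instance] CostandardFamily.acg CostandardFamily.modR CostandardFamily.modA
  CostandardFamily.tower

/-- `T` is a family of (partial) tilting modules forming a characteristic tilting module
`⊕ T(λ)`: each `T(λ)` admits an exact sequence `0 → Δ(λ) → T(λ) → X(λ) → 0` with
`X(λ) ∈ F(Δ̃_{μ<λ})` and an exact sequence `0 → Y(λ) → T(λ) → ∇(λ) → 0` with
`Y(λ) ∈ F(∇̃_{μ<λ})`. -/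
def IsCharTilting (Δ : Λ → Type) [∀ l, AddCommGroup (Δ l)] [∀ l, Module R (Δ l)]
    [∀ l, Module A (Δ l)] [∀ l, IsScalarTower R A (Δ l)]
    (N : Λ → Type) [∀ l, AddCommGroup (N l)] [∀ l, Module R (N l)]
    [∀ l, Module A (N l)] [∀ l, IsScalarTower R A (N l)]
    (T : Λ → Type) [∀ l, AddCommGroup (T l)] [∀ l, Module A (T l)] : Prop :=
  ∀ l : Λ,
    (∃ f : Δ l →ₗ[A] T l, Function.Injective f ∧
      InFilt R A Λ Δ {m | m < l} ((T l) ⧸ LinearMap.range f)) ∧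
    (∃ g : T l →ₗ[A] N l, Function.Surjective g ∧
      InFilt R A Λ N {m | m < l} ↥(LinearMap.ker g))

end Core

end

noncomputable section

section Balanced

variable (R : Type) [CommRing R]

/-- The submodule of relations defining the balanced tensor product `X ⊗_B Y` of a right
`B`-module `X` and a left `B`-module `Y` (presented as a quotient of `X ⊗_R Y`). -/
def balRel (B : Type) [Ring B] (X Y : Type)
    [AddCommGroup X] [Module R X] [Module Bᵐᵒᵖ X]
    [AddCommGroup Y] [Module R Y] [Module B Y] : Submodule R (X ⊗[R] Y) :=
  Submodule.span R {z | ∃ (b : B) (x : X) (y : Y),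
    z = (MulOpposite.op b • x) ⊗ₜ[R] y - x ⊗ₜ[R] (b • y)}

/-- The balanced tensor product `X ⊗_B Y` of a right `B`-module `X` and a left `B`-module
`Y`, as an `R`-module. -/
def BalTensor (B : Type) [Ring B] (X Y : Type)
    [AddCommGroup X] [Module R X] [Module Bᵐᵒᵖ X]
    [AddCommGroup Y] [Module R Y] [Module B Y] : Type :=
  (X ⊗[R] Y) ⧸ balRel R B X Y

instance (B : Type) [Ring B] (X Y : Type)
    [AddCommGroup X] [Module R X] [Module Bᵐᵒᵖ X]
    [AddCommGroup Y] [Module R Y] [Module B Y] : AddCommGroup (BalTensor R B X Y) :=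
  inferInstanceAs (AddCommGroup ((X ⊗[R] Y) ⧸ balRel R B X Y))

instance (B : Type) [Ring B] (X Y : Type)
    [AddCommGroup X] [Module R X] [Module Bᵐᵒᵖ X]
    [AddCommGroup Y] [Module R Y] [Module B Y] : Module R (BalTensor R B X Y) :=
  inferInstanceAs (Module R ((X ⊗[R] Y) ⧸ balRel R B X Y))

/-- The `R`-linear map `X ⊗_B Y → X ⊗_B Y'` induced by a `B`-linear map `φ : Y → Y'`. -/
def balMap (B : Type) [Ring B] [Algebra R B] (X : Type) [AddCommGroup X] [Module R X] [Module Bᵐᵒᵖ X]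
    {Y Y' : Type} [AddCommGroup Y] [Module R Y] [Module B Y] [IsScalarTower R B Y]
    [AddCommGroup Y'] [Module R Y'] [Module B Y'] [IsScalarTower R B Y']
    (φ : Y →ₗ[B] Y') : BalTensor R B X Y →ₗ[R] BalTensor R B X Y' :=
  Submodule.mapQ (balRel R B X Y) (balRel R B X Y')
    (LinearMap.lTensor X (LinearMap.restrictScalars R φ)) (by
      rw [balRel, Submodule.span_le]
      rintro z ⟨b, x, y, rfl⟩
      simp only [SetLike.mem_coe, Submodule.mem_comap, map_sub, LinearMap.lTensor_tmul,
        LinearMap.coe_restrictScalars, map_smul]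
      exact Submodule.subset_span ⟨b, x, φ y, rfl⟩)

end Balanced

universe v w

section FiniteProjective

variable (R : Type*) [CommRing R]

/-- `X` is a finitely generated projective `R`-module. -/
abbrev FiniteProjective (X : Type*) [AddCommGroup X] [Module R X] : Prop :=
  Module.Finite R X ∧ Module.Projective R X

variable {R} {X Y Z : Type*} [AddCommGroup X] [Module R X] [AddCommGroup Y] [Module R Y]
  [AddCommGroup Z] [Module R Z]

namespace FiniteProjective

lemma of_leftInverse (h : FiniteProjective R Y) (i : X →ₗ[R] Y) (p : Y →ₗ[R] X)
    (hpi : p ∘ₗ i = LinearMap.id) : FiniteProjective R X :=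
  have := h.1
  have := h.2
  ⟨.of_surjective p (LinearMap.surjective_of_comp_eq_id i p hpi), .of_split i p hpi⟩

lemma of_equiv (h : FiniteProjective R Y) (e : X ≃ₗ[R] Y) : FiniteProjective R X :=
  h.of_leftInverse e.toLinearMap e.symm.toLinearMap (by simp)

lemma dual (h : FiniteProjective R X) : FiniteProjective R (X →ₗ[R] R) :=
  have := h.1
  have := h.2
  ⟨inferInstance, inferInstance⟩

lemma of_exact (hX : FiniteProjective R X) (hZ : FiniteProjective R Z) {f : X →ₗ[R] Y}
    {g : Y →ₗ[R] Z} (hf : Function.Injective f) (hfg : Function.Exact f g)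
    (hg : Function.Surjective g) : FiniteProjective R Y := by
  have := hX.1
  have := hX.2
  have := hZ.1
  have := hZ.2
  have hXZ : FiniteProjective R (X × Z) := ⟨inferInstance, inferInstance⟩
  obtain ⟨s, hs⟩ := Module.projective_lifting_property g .id hg
  exact hXZ.of_equiv (hfg.splitSurjectiveEquiv hf ⟨s, hs⟩).1

end FiniteProjective

lemma exists_leftInverse_of_surjective_dualMap (hX : FiniteProjective R X) (f : X →ₗ[R] Y)
    (hf : Function.Surjective f.dualMap) : ∃ g : Y →ₗ[R] X, g ∘ₗ f = LinearMap.id := by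
  have := hX.1
  have := hX.2
  obtain ⟨n, p, i, -, -, hpi⟩ := Module.Finite.exists_comp_eq_id_of_projective R X
  choose φ hφ using fun j => hf (LinearMap.proj j ∘ₗ i)
  refine ⟨p ∘ₗ LinearMap.pi φ, ?_⟩
  have hi : LinearMap.pi φ ∘ₗ f = i :=
    LinearMap.ext fun x => funext fun j => LinearMap.congr_fun (hφ j) x
  rw [LinearMap.comp_assoc, hi, hpi]

end FiniteProjective

section ObjectProperty

open Limits

section

variable {C : Type*} [Category* C] [Abelian C] (P : ObjectProperty C)
  [P.IsClosedUnderExtensions] [P.IsClosedUnderIsomorphisms]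

instance isClosedUnderBinaryProducts_of_isClosedUnderExtensions :
    P.IsClosedUnderBinaryProducts :=
  .mk' <| by
    rintro _ ⟨F, hF⟩
    have e : limit F ≅ F.obj ⟨.left⟩ ⊞ F.obj ⟨.right⟩ :=
      HasLimit.isoOfNatIso (diagramIsoPair F) ≪≫ (biprod.isoProd _ _).symm
    exact P.prop_of_iso e.symm (P.prop_biprod (hF _) (hF _))

instance isClosedUnderFiniteProducts_of_isClosedUnderExtensions [P.ContainsZero] :
    P.IsClosedUnderFiniteProducts :=
  .mk'

end

variable {R : Type v} {A : Type*} [CommRing R] [Ring A] [Algebra R A]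
  (P : ObjectProperty (ModuleCat.{v} A))

lemma prop_of_comp_eq_id [P.IsStableUnderRetracts] {X Y : Type v} [AddCommGroup X] [Module A X]
    [AddCommGroup Y] [Module A Y] (i : X →ₗ[A] Y) (p : Y →ₗ[A] X)
    (hpi : p ∘ₗ i = LinearMap.id) (hY : P (.of A Y)) : P (.of A X) :=
  P.prop_of_retract ⟨ModuleCat.ofHom i, ModuleCat.ofHom p, ModuleCat.hom_ext hpi⟩ hY

lemma prop_of_ker_of_surjective [P.IsClosedUnderExtensions] {X Y : Type v} [AddCommGroup X]
    [Module A X] [AddCommGroup Y] [Module A Y] {g : X →ₗ[A] Y} (hg : Function.Surjective g)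
    (hK : P (.of A (LinearMap.ker g))) (hY : P (.of A Y)) : P (.of A X) :=
  P.prop_X₂_of_shortExact (LinearMap.shortExact_shortComplexKer hg) hK hY

lemma prop_of_subsingleton [P.ContainsZero] [P.IsClosedUnderIsomorphisms] (X : Type v)
    [AddCommGroup X] [Module A X] [Subsingleton X] : P (.of A X) :=
  P.prop_of_isZero (ModuleCat.isZero_of_subsingleton _)

lemma prop_pi [P.IsClosedUnderExtensions] [P.IsClosedUnderIsomorphisms] [P.ContainsZero]
    {ι : Type} [Finite ι] (X : ι → Type v) [∀ i, AddCommGroup (X i)] [∀ i, Module A (X i)]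
    (hX : ∀ i, P (.of A (X i))) : P (.of A (∀ i, X i)) :=
  P.prop_of_iso (ModuleCat.piIsoPi fun i => ModuleCat.of A (X i)) (P.prop_product hX)

lemma prop_tensorProduct [P.IsClosedUnderExtensions] [P.IsStableUnderRetracts] [P.ContainsZero]
    (X : Type v) [AddCommGroup X] [Module R X] [Module A X] [IsScalarTower R A X]
    (U : Type v) [AddCommGroup U] [Module R U] [Module.Finite R U] [Module.Projective R U]
    (hX : P (.of A X)) : P (.of A (X ⊗[R] U)) := by
  obtain ⟨n, p, i, -, -, hpi⟩ := Module.Finite.exists_comp_eq_id_of_projective R U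
  let e : X ⊗[R] (Fin n → R) ≃ₗ[A] Fin n → X :=
    TensorProduct.AlgebraTensorModule.congr (.refl A X)
        (Finsupp.linearEquivFunOnFinite R R (Fin n)).symm ≪≫ₗ
      TensorProduct.finsuppScalarRight R A X (Fin n) ≪≫ₗ
      Finsupp.linearEquivFunOnFinite A X (Fin n)
  refine prop_of_comp_eq_id P (TensorProduct.AlgebraTensorModule.lTensor A X i)
    (TensorProduct.AlgebraTensorModule.lTensor A X p) ?_
    (P.prop_of_iso e.symm.toModuleIso (prop_pi P _ fun _ => hX))
  rw [← TensorProduct.AlgebraTensorModule.lTensor_comp, hpi,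
    TensorProduct.AlgebraTensorModule.lTensor_id]

end ObjectProperty

section Ext

open Abelian
open scoped ZeroObject

variable {C : Type*} [Category* C] [Abelian C] [HasExt.{w} C]

lemma subsingleton_ext_of_shortExact_left {S : ShortComplex C} (hS : S.ShortExact) {Y : C} {n : ℕ}
    [Subsingleton (Ext S.X₁ Y n)] [Subsingleton (Ext S.X₃ Y n)] : Subsingleton (Ext S.X₂ Y n) :=
  subsingleton_of_forall_eq 0 fun x => by
    obtain ⟨y, rfl⟩ := Ext.contravariant_sequence_exact₂ hS Y x (Subsingleton.elim _ _)
    rw [Subsingleton.elim y 0, Ext.comp_zero]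

lemma subsingleton_ext_of_shortExact_right {S : ShortComplex C} (hS : S.ShortExact) {X : C} {n : ℕ}
    [Subsingleton (Ext X S.X₁ n)] [Subsingleton (Ext X S.X₃ n)] : Subsingleton (Ext X S.X₂ n) :=
  subsingleton_of_forall_eq 0 fun x => by
    obtain ⟨y, rfl⟩ := Ext.covariant_sequence_exact₂ X hS x (Subsingleton.elim _ _)
    rw [Subsingleton.elim y 0, Ext.zero_comp]

lemma subsingleton_ext_of_retract_left {X X' Y : C} (r : Retract X X') {n : ℕ}
    [Subsingleton (Ext X' Y n)] : Subsingleton (Ext X Y n) :=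
  subsingleton_of_forall_eq 0 fun x => by
    rw [← Ext.mk₀_id_comp x, ← r.retract, ← Ext.mk₀_comp_mk₀_assoc,
      Subsingleton.elim ((Ext.mk₀ r.r).comp x (zero_add n)) 0, Ext.comp_zero]

lemma subsingleton_ext_of_retract_right {X Y Y' : C} (r : Retract Y Y') {n : ℕ}
    [Subsingleton (Ext X Y' n)] : Subsingleton (Ext X Y n) :=
  subsingleton_of_forall_eq 0 fun x => by
    rw [← Ext.comp_mk₀_id x, ← r.retract, ← Ext.mk₀_comp_mk₀,
      ← Ext.comp_assoc_of_second_deg_zero,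
      Subsingleton.elim (x.comp (Ext.mk₀ r.i) (add_zero n)) 0, Ext.zero_comp]

lemma exists_f_comp_eq_of_subsingleton_ext {S : ShortComplex C} (hS : S.ShortExact) {Y : C}
    [Subsingleton (Ext S.X₃ Y 1)] (φ : S.X₁ ⟶ Y) : ∃ ψ : S.X₂ ⟶ Y, S.f ≫ ψ = φ := by
  obtain ⟨x, hx⟩ := Ext.contravariant_sequence_exact₁ hS Y (Ext.mk₀ φ) rfl (Subsingleton.elim _ _)
  obtain ⟨ψ, rfl⟩ := (Ext.mk₀_bijective _ _).2 x
  exact ⟨ψ, (Ext.mk₀_bijective _ _).1 (by rw [← hx, Ext.mk₀_comp_mk₀])⟩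

lemma exists_comp_g_eq_of_subsingleton_ext {S : ShortComplex C} (hS : S.ShortExact) {X : C}
    [Subsingleton (Ext X S.X₁ 1)] (φ : X ⟶ S.X₃) : ∃ ψ : X ⟶ S.X₂, ψ ≫ S.g = φ := by
  obtain ⟨x, hx⟩ := Ext.covariant_sequence_exact₃ X hS (Ext.mk₀ φ) rfl (Subsingleton.elim _ _)
  obtain ⟨ψ, rfl⟩ := (Ext.mk₀_bijective _ _).2 x
  exact ⟨ψ, (Ext.mk₀_bijective _ _).1 (by rw [← hx, Ext.mk₀_comp_mk₀])⟩

/-- The objects `X` with `Extⁱ(X, Y j) = 0` for all `i > 0` and all members `Y j` of a family. -/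
def extAcyclic {ι : Type*} (Y : ι → C) : ObjectProperty C := fun X =>
  ∀ j i, Subsingleton (Ext X (Y j) (i + 1))

namespace extAcyclic

variable {ι : Type*} (Y : ι → C)

instance : (extAcyclic Y).IsClosedUnderExtensions where
  prop_X₂_of_shortExact hS h₁ h₃ j i :=
    have := h₁ j i
    have := h₃ j i
    subsingleton_ext_of_shortExact_left hS

instance : (extAcyclic Y).IsStableUnderRetracts where
  of_retract r h j i :=
    have := h j i
    subsingleton_ext_of_retract_left r

instance : (extAcyclic Y).ContainsZero where
  exists_zero := ⟨0, Limits.isZero_zero C, fun _ _ => Ext.subsingleton_of_projective _ _ _⟩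

variable {Y}

lemma X₁_of_shortExact {S : ShortComplex C} (hS : S.ShortExact) (h₂ : extAcyclic Y S.X₂)
    (h₃ : extAcyclic Y S.X₃) : extAcyclic Y S.X₁ := fun j i =>
  have := h₂ j i
  have := h₃ j (i + 1)
  subsingleton_of_forall_eq 0 fun x => by
    obtain ⟨y, rfl⟩ := Ext.contravariant_sequence_exact₁ hS (Y j) x (add_comm 1 _)
      (Subsingleton.elim _ _)
    rw [Subsingleton.elim y 0, Ext.comp_zero]

lemma X₃_of_shortExact {S : ShortComplex C} (hS : S.ShortExact) (h₁ : extAcyclic Y S.X₁)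
    (h₂ : extAcyclic Y S.X₂) (hf : ∀ j (φ : S.X₁ ⟶ Y j), ∃ ψ : S.X₂ ⟶ Y j, S.f ≫ ψ = φ) :
    extAcyclic Y S.X₃ := fun j i =>
  have := h₂ j i
  subsingleton_of_forall_eq 0 fun x => by
    obtain ⟨y, rfl⟩ := Ext.contravariant_sequence_exact₃ hS (Y j) x (Subsingleton.elim _ _)
      (add_comm 1 i)
    cases i with
    | zero =>
      obtain ⟨φ, rfl⟩ := (Ext.mk₀_bijective _ _).2 y
      obtain ⟨ψ, rfl⟩ := hf j φ
      rw [← Ext.mk₀_comp_mk₀, ← Ext.comp_assoc_of_third_deg_zero, hS.extClass_comp, Ext.zero_comp]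
    | succ i =>
      have := h₁ j i
      rw [Subsingleton.elim y 0, Ext.comp_zero]

lemma of_projective (X : C) [Projective X] : extAcyclic Y X :=
  fun _ _ => Ext.subsingleton_of_projective _ _ _

end extAcyclic

end Ext

section Filtration

variable {R : Type} [CommRing R] {A : Type} [Ring A] [Algebra R A] {Λ : Type}
  {Δ : Λ → Type} [∀ l, AddCommGroup (Δ l)] [∀ l, Module R (Δ l)] [∀ l, Module A (Δ l)]
  [∀ l, IsScalarTower R A (Δ l)] (P : ObjectProperty (ModuleCat.{0} A))
  [P.IsClosedUnderExtensions] [P.IsStableUnderRetracts] [P.ContainsZero]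

lemma prop_of_inFilt {S : Set Λ} {M : Type} [AddCommGroup M] [Module A M]
    (hM : InFilt R A Λ Δ S M) (hΔ : ∀ l ∈ S, P (.of A (Δ l))) : P (.of A M) := by
  obtain ⟨-, n, c, hbot, htop, hc, hfactor⟩ := hM
  have hP (i : Fin (n + 1)) : P (.of A (c i)) := by
    induction i using Fin.induction with
    | zero =>
      rw [hbot]
      exact prop_of_subsingleton P _
    | succ i ih =>
      obtain ⟨l, hl, U, _, _, e⟩ := hfactor i
      refine prop_of_ker_of_surjective P (Submodule.mkQ_surjective
        ((c i.castSucc).comap (c i.succ).subtype)) ?_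
        (P.prop_of_iso e.symm.toModuleIso (prop_tensorProduct P _ U (hΔ l hl)))
      rw [Submodule.ker_mkQ]
      exact P.prop_of_iso
        (Submodule.comapSubtypeEquivOfLe (hc i.castSucc_le_succ)).symm.toModuleIso ih
  have := hP (Fin.last n)
  rw [htop] at this
  exact P.prop_of_iso Submodule.topEquiv.toModuleIso this

lemma prop_of_inAdd {T X : Type} [AddCommGroup T] [Module A T] [AddCommGroup X] [Module A X]
    (hX : InAdd A T X) (hT : P (.of A T)) : P (.of A X) := by
  obtain ⟨n, i, p, hpi⟩ := hX
  exact prop_of_comp_eq_id P i p hpi (prop_pi P _ fun _ => hT)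

end Filtration

section ExtVanish

open Abelian

variable {A : Type} [Ring A] {M N : Type} [AddCommGroup M] [Module A M] [AddCommGroup N]
  [Module A N]

lemma extVanish.subsingleton_ext {n : ℕ} (h : extVanish A M N (n + 1)) :
    Subsingleton (Ext (ModuleCat.of A M) (ModuleCat.of A N) (n + 1)) := by
  let P := ProjectiveResolution.of (ModuleCat.of A M)
  have hexact : (P.complex.linearYonedaObj ℤ (ModuleCat.of A N)).ExactAt (n + 1) := by
    have : Subsingleton _ := h
    rw [HomologicalComplex.exactAt_iff_isZero_homology]
    exact (ModuleCat.isZero_of_subsingleton _).of_iso (P.isoExt (R := ℤ) _ _).symm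
  rw [HomologicalComplex.exactAt_iff' _ n (n + 1) (n + 2) (by simp) (by simp),
    ShortComplex.moduleCat_exact_iff] at hexact
  refine subsingleton_of_forall_eq 0 fun α => ?_
  obtain ⟨f, hf, rfl⟩ := P.extMk_surjective α (n + 2) rfl
  obtain ⟨g, hg⟩ := hexact f hf
  exact (P.extMk_eq_zero_iff f _ rfl hf n rfl).2 ⟨g, hg⟩

end ExtVanish

section CodRestrict

variable {R M N P : Type*} [Ring R] [AddCommGroup M] [Module R M] [AddCommGroup N] [Module R N]
  [AddCommGroup P] [Module R P] {f : M →ₗ[R] N} {g : N →ₗ[R] P}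

lemma surjective_codRestrict_ker (h : Function.Exact f g) :
    Function.Surjective (f.codRestrict (LinearMap.ker g) h.apply_apply_eq_zero) := fun x =>
  let ⟨y, hy⟩ := (h x).1 x.2
  ⟨y, Subtype.ext hy⟩

lemma exact_codRestrict (h : Function.Exact f g) {p : Submodule R P} (hp : ∀ x, g x ∈ p) :
    Function.Exact f (g.codRestrict p hp) := fun x => by
  rw [← h x, ← Subtype.val_inj]
  rfl

end CodRestrict

section RightHom

/-- `R`-linear maps from a right `A`-module `X` to an `R`-module `V`. This is a synonym of
`X →ₗ[R] V` carrying the left `A`-action `(a • f) x = f (x a)`, which cannot be an instance on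
`X →ₗ[R] V` itself since it would compete with the pointwise action when `V` is an `A`-module. -/
def RightHom (R X V : Type) [CommRing R] [AddCommGroup X] [Module R X] [AddCommGroup V]
    [Module R V] : Type :=
  X →ₗ[R] V

namespace RightHom

variable {R : Type} [CommRing R] {A : Type} [Ring A] [Algebra R A] {X : Type} [AddCommGroup X]
  [Module R X] {V W : Type} [AddCommGroup V] [Module R V] [AddCommGroup W] [Module R W]

instance : AddCommGroup (RightHom R X V) := inferInstanceAs (AddCommGroup (X →ₗ[R] V))

instance : Module R (RightHom R X V) := inferInstanceAs (Module R (X →ₗ[R] V))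

instance : FunLike (RightHom R X V) X V := inferInstanceAs (FunLike (X →ₗ[R] V) X V)

instance : LinearMapClass (RightHom R X V) R X V :=
  inferInstanceAs (LinearMapClass (X →ₗ[R] V) R X V)

@[ext]
lemma ext {f g : RightHom R X V} (h : ∀ x, f x = g x) : f = g := DFunLike.ext f g h

variable [Module Aᵐᵒᵖ X] [IsScalarTower R Aᵐᵒᵖ X]

instance : Module A (RightHom R X V) where
  smul a f := LinearMap.comp f (actL R Aᵐᵒᵖ X (.op a))
  one_smul f := ext fun x => congrArg f (one_smul Aᵐᵒᵖ x)
  mul_smul a b f := ext fun x => congrArg f (mul_smul (MulOpposite.op b) (MulOpposite.op a) x)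
  smul_zero _ := rfl
  smul_add _ _ _ := rfl
  add_smul a b f := ext fun x =>
    (congrArg f (add_smul (MulOpposite.op a) (MulOpposite.op b) x)).trans (map_add f _ _)
  zero_smul f := ext fun x => (congrArg f (zero_smul Aᵐᵒᵖ x)).trans (map_zero f)

instance : IsScalarTower R A (RightHom R X V) where
  smul_assoc r a f := ext fun x =>
    (congrArg f (smul_assoc r (MulOpposite.op a) x)).trans (map_smul f _ _)

/-- Postcomposition with an `R`-linear map, as a map of left `A`-modules. -/
def map (g : V →ₗ[R] W) : RightHom R X V →ₗ[A] RightHom R X W where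
  toFun f := g ∘ₗ f
  map_add' _ _ := LinearMap.comp_add _ _ _
  map_smul' _ _ := rfl

lemma map_surjective [Module.Projective R X] {g : V →ₗ[R] W} (hg : Function.Surjective g) :
    Function.Surjective (map (A := A) (X := X) g) := fun f =>
  Module.projective_lifting_property g f hg

/-- `0 → Hom_R(X, ker g) → Hom_R(X, V) → Hom_R(X, W)` for an `R`-linear map `g : V → W`. -/
abbrev shortComplexKer (g : V →ₗ[R] W) : ShortComplex (ModuleCat.{0} A) :=
  ModuleCat.shortComplexOfCompEqZero (map (X := X) (LinearMap.ker g).subtype) (map g)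
    (LinearMap.ext fun f => RightHom.ext fun x => (f x).2)

lemma shortExact_shortComplexKer [Module.Projective R X] {g : V →ₗ[R] W}
    (hg : Function.Surjective g) : (shortComplexKer (A := A) (X := X) g).ShortExact := by
  refine ModuleCat.shortComplex_shortExact _ (fun f => ⟨fun hf => ?_, ?_⟩) (fun f₁ f₂ hf => ?_)
    (map_surjective hg)
  · exact ⟨LinearMap.codRestrict _ f fun x => DFunLike.congr_fun hf x, rfl⟩
  · rintro ⟨f, rfl⟩
    exact RightHom.ext fun x => (f x).2
  · exact RightHom.ext fun x => Subtype.ext (DFunLike.congr_fun hf x)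

/-- Evaluation identifies a finitely generated projective module with its double dual. -/
def evalEquiv (N : Type) [AddCommGroup N] [Module R N] [Module A N] [IsScalarTower R A N]
    (hN : FiniteProjective R N) : N ≃ₗ[A] RightHom R (N →ₗ[R] R) R :=
  have := hN.1
  have := hN.2
  { Module.evalEquiv R N with map_smul' := fun _ _ => rfl }

end RightHom

end RightHom

section BalTensor

variable {R : Type} [CommRing R] {A : Type} [Ring A] (X : Type) [AddCommGroup X]
  [Module R X] [Module Aᵐᵒᵖ X]

namespace BalTensor

section

variable {M : Type} [AddCommGroup M] [Module R M] [Module A M]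

variable (R A M) in
/-- The class of a pure tensor in `X ⊗_A M`. -/
def mk : X →ₗ[R] M →ₗ[R] BalTensor R A X M :=
  (TensorProduct.mk R X M).compr₂ (balRel R A X M).mkQ

lemma finite [Module.Finite R X] [Module.Finite R M] : Module.Finite R (BalTensor R A X M) :=
  inferInstanceAs (Module.Finite R ((X ⊗[R] M) ⧸ balRel R A X M))

variable {X}

lemma mk_op_smul (a : A) (x : X) (m : M) :
    mk R A X M (MulOpposite.op a • x) m = mk R A X M x (a • m) :=
  (Submodule.Quotient.eq _).2 (Submodule.subset_span ⟨a, x, m, rfl⟩)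

@[ext]
lemma hom_ext {V : Type} [AddCommGroup V] [Module R V] {f g : BalTensor R A X M →ₗ[R] V}
    (h : ∀ x m, f (mk R A X M x m) = g (mk R A X M x m)) : f = g :=
  Submodule.linearMap_qext _ (TensorProduct.ext' h)

variable [Algebra R A] [IsScalarTower R A M] [IsScalarTower R Aᵐᵒᵖ X] {V : Type}
  [AddCommGroup V] [Module R V]

/-- The tensor-hom adjunction `Hom_R(X ⊗_A M, V) ≃ Hom_A(M, Hom_R(X, V))`. -/
def homEquiv : (BalTensor R A X M →ₗ[R] V) ≃ (M →ₗ[A] RightHom R X V) where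
  toFun φ :=
    { toFun := fun m => φ ∘ₗ (mk R A X M).flip m
      map_add' := fun m m' => RightHom.ext fun x =>
        (congrArg φ (map_add (mk R A X M x) m m')).trans (map_add φ _ _)
      map_smul' := fun a m => RightHom.ext fun x => congrArg φ (mk_op_smul a x m).symm }
  invFun f := (balRel R A X M).liftQ
    (TensorProduct.lift (LinearMap.flip (f.restrictScalars R : M →ₗ[R] X →ₗ[R] V))) <| by
      rw [balRel, Submodule.span_le]
      rintro _ ⟨a, x, m, rfl⟩
      have hf : f m (MulOpposite.op a • x) = f (a • m) x :=
        (DFunLike.congr_fun (map_smul f a m) x).symm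
      exact (map_sub (TensorProduct.lift _) _ _).trans (sub_eq_zero.2 hf)
  left_inv φ := hom_ext fun _ _ => rfl
  right_inv f := rfl

end

variable {X} [Algebra R A] {M M' : Type} [AddCommGroup M] [Module R M] [Module A M]
  [IsScalarTower R A M] [AddCommGroup M'] [Module R M'] [Module A M'] [IsScalarTower R A M']
  {V W : Type} [AddCommGroup V] [Module R V] [AddCommGroup W] [Module R W]

lemma balMap_mk (f : M →ₗ[A] M') (x : X) (m : M) :
    balMap R A X f (mk R A X M x m) = mk R A X M' x (f m) :=
  rfl

variable [IsScalarTower R Aᵐᵒᵖ X]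

lemma homEquiv_comp_balMap (φ : BalTensor R A X M' →ₗ[R] V) (f : M →ₗ[A] M') :
    homEquiv (φ ∘ₗ balMap R A X f) = homEquiv φ ∘ₗ f :=
  rfl

lemma homEquiv_symm_comp (f : M →ₗ[A] RightHom R X V) (g : V →ₗ[R] W) :
    homEquiv.symm (RightHom.map g ∘ₗ f) = g ∘ₗ homEquiv.symm f :=
  hom_ext fun _ _ => rfl

end BalTensor

end BalTensor

section RightHomAcyclic

variable (R : Type) [CommRing R] {A : Type} [Ring A] [Algebra R A] (X : Type) [AddCommGroup X]
  [Module R X] [Module Aᵐᵒᵖ X] [IsScalarTower R Aᵐᵒᵖ X]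

/-- The `A`-modules `M` with `Extⁱ_A(M, Hom_R(X, V)) = 0` for all `i > 0` and all `R`-modules `V`.
For `X` projective over `R`, tensor-hom adjunction turns this into the condition that `X ⊗_A M` is
projective over `R` and `Tor^A_i(X, M) = 0` for `i > 0`. -/
abbrev rightHomAcyclic : ObjectProperty (ModuleCat.{0} A) :=
  extAcyclic fun V : ModuleCat.{0} R => ModuleCat.of A (RightHom R X V)

namespace rightHomAcyclic

variable {R X} {M : Type} [AddCommGroup M] [Module A M]

lemma ker {P : Type} [AddCommGroup P] [Module A P] [Module.Projective A P] {p : P →ₗ[A] M}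
    (hp : Function.Surjective p) (hM : rightHomAcyclic R X (.of A M)) :
    rightHomAcyclic R X (.of A (LinearMap.ker p)) :=
  have : Projective (ModuleCat.of A P) := (IsProjective.iff_projective P).1 inferInstance
  extAcyclic.X₁_of_shortExact (LinearMap.shortExact_shortComplexKer hp) (.of_projective _) hM

lemma projective_balTensor [Module.Projective R X] [Module R M] [IsScalarTower R A M]
    (hM : rightHomAcyclic R X (.of A M)) :
    Module.Projective R (BalTensor R A X M) :=
  .of_lifting_property'' fun g hg => by
    have := hM (.of R (LinearMap.ker g)) 0
    obtain ⟨ψ, hψ⟩ := exists_comp_g_eq_of_subsingleton_ext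
      (RightHom.shortExact_shortComplexKer (A := A) (X := X) hg)
      (ModuleCat.ofHom (BalTensor.homEquiv (M := M) .id))
    refine ⟨BalTensor.homEquiv.symm ψ.hom, ?_⟩
    rw [← BalTensor.homEquiv_symm_comp, Equiv.symm_apply_eq]
    exact congrArg ModuleCat.Hom.hom hψ

section

variable {P₀ P₁ P₂ : Type} [AddCommGroup P₀] [Module R P₀] [Module A P₀] [IsScalarTower R A P₀]
  [AddCommGroup P₁] [Module R P₁] [Module A P₁] [IsScalarTower R A P₁] [AddCommGroup P₂]
  [Module R P₂] [Module A P₂] [IsScalarTower R A P₂] {d₁ : P₂ →ₗ[A] P₁} {d₀ : P₁ →ₗ[A] P₀}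
  {ε : P₀ →ₗ[A] M}

lemma exists_comp_balMap_eq (hM : rightHomAcyclic R X (.of A M)) (hε : Function.Surjective ε)
    (h₀ : Function.Exact d₀ ε) (h₁ : Function.Exact d₁ d₀) {V : Type} [AddCommGroup V] [Module R V]
    (φ : BalTensor R A X P₁ →ₗ[R] V) (hφ : φ ∘ₗ balMap R A X d₁ = 0) :
    ∃ ψ : BalTensor R A X P₀ →ₗ[R] V, ψ ∘ₗ balMap R A X d₀ = φ := by
  let d₀' := d₀.codRestrict (LinearMap.ker ε) h₀.apply_apply_eq_zero
  have hd₀' : Function.Exact d₁ d₀' := exact_codRestrict h₁ _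
  have hφ' : BalTensor.homEquiv φ ∘ₗ d₁ = 0 := by
    rw [← BalTensor.homEquiv_comp_balMap, hφ]
    rfl
  let φ' : LinearMap.ker ε →ₗ[A] RightHom R X V :=
    (LinearMap.range d₁).liftQ _ (LinearMap.range_le_ker_iff.2 hφ') ∘ₗ
      (hd₀'.linearEquivOfSurjective (surjective_codRestrict_ker h₀)).symm.toLinearMap
  have hφ'd₀' : φ' ∘ₗ d₀' = BalTensor.homEquiv φ := by
    ext1 x
    simp [φ']
  have := hM (.of R V) 0
  obtain ⟨ψ, hψ⟩ := exists_f_comp_eq_of_subsingleton_ext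
    (LinearMap.shortExact_shortComplexKer hε) (ModuleCat.ofHom φ')
  refine ⟨BalTensor.homEquiv.symm ψ.hom, BalTensor.homEquiv.injective ?_⟩
  rw [BalTensor.homEquiv_comp_balMap, Equiv.apply_symm_apply, ← hφ'd₀']
  exact congrArg (fun f => f.hom ∘ₗ d₀') hψ

lemma exact_balMap (hM : rightHomAcyclic R X (.of A M)) (hε : Function.Surjective ε)
    (h₀ : Function.Exact d₀ ε) (h₁ : Function.Exact d₁ d₀) :
    Function.Exact (balMap R A X d₁) (balMap R A X d₀) := by
  refine fun z => ⟨fun hz => ?_, ?_⟩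
  · obtain ⟨ψ, hψ⟩ := hM.exists_comp_balMap_eq hε h₀ h₁ _ (LinearMap.range_mkQ_comp _)
    refine (Submodule.Quotient.mk_eq_zero (LinearMap.range (balMap R A X d₁))).1 ?_
    rw [← Submodule.mkQ_apply, ← hψ, LinearMap.comp_apply, hz, map_zero]
  · have hcomp : balMap R A X d₀ ∘ₗ balMap R A X d₁ = 0 :=
      BalTensor.hom_ext fun x m => by
        simp [BalTensor.balMap_mk, h₁.apply_apply_eq_zero]
    rintro ⟨y, rfl⟩
    exact LinearMap.congr_fun hcomp y

end

lemma exact_balMap_resolution (hM : rightHomAcyclic R X (.of A M)) {P : ℕ → Type}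
    [∀ i, AddCommGroup (P i)] [∀ i, Module R (P i)] [∀ i, Module A (P i)]
    [∀ i, IsScalarTower R A (P i)] [∀ i, Module.Projective A (P i)]
    {d : ∀ i, P (i + 1) →ₗ[A] P i} {ε : P 0 →ₗ[A] M} (hε : Function.Surjective ε)
    (h₀ : Function.Exact (d 0) ε) (hd : ∀ i, Function.Exact (d (i + 1)) (d i)) (i : ℕ) :
    Function.Exact (balMap R A X (d (i + 1))) (balMap R A X (d i)) := by
  induction i generalizing M P with
  | zero => exact hM.exact_balMap hε h₀ (hd 0)
  | succ _ ih =>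
    let ε' : P 1 →ₗ[A] LinearMap.ker ε := (d 0).codRestrict _ h₀.apply_apply_eq_zero
    exact ih (hM.ker hε) (P := fun i => P (i + 1)) (d := fun i => d (i + 1)) (ε := ε')
      (surjective_codRestrict_ker h₀) (exact_codRestrict (hd 0) _) fun i => hd (i + 1)

lemma of_ker {P : Type} [AddCommGroup P] [Module R P] [Module A P] [IsScalarTower R A P]
    [Module.Projective A P] [Module.Finite R A] (hX : FiniteProjective R X) {p : P →ₗ[A] M}
    (hp : Function.Surjective p) [Module.Finite A (LinearMap.ker p)]
    (hK : rightHomAcyclic R X (.of A (LinearMap.ker p)))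
    [Subsingleton (Abelian.Ext (ModuleCat.of A M) (ModuleCat.of A (RightHom R X R)) 1)] :
    rightHomAcyclic R X (.of A M) := by
  have := hX.1
  have := hX.2
  have : Projective (ModuleCat.of A P) := (IsProjective.iff_projective P).1 inferInstance
  have hS := LinearMap.shortExact_shortComplexKer hp
  have hfin : FiniteProjective R (BalTensor R A X (LinearMap.ker p)) :=
    have := Module.Finite.trans (R := R) A (LinearMap.ker p)
    ⟨BalTensor.finite X, hK.projective_balTensor⟩
  have hdual : Function.Surjective (balMap R A X (LinearMap.ker p).subtype).dualMap := fun φ => by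
    obtain ⟨ψ, hψ⟩ := exists_f_comp_eq_of_subsingleton_ext hS
      (ModuleCat.ofHom (BalTensor.homEquiv φ))
    refine ⟨BalTensor.homEquiv.symm ψ.hom, BalTensor.homEquiv.injective ?_⟩
    exact congrArg ModuleCat.Hom.hom hψ
  obtain ⟨g, hg⟩ := exists_leftInverse_of_surjective_dualMap hfin _ hdual
  refine extAcyclic.X₃_of_shortExact hS hK (.of_projective _) fun V φ =>
    ⟨ModuleCat.ofHom (BalTensor.homEquiv (BalTensor.homEquiv.symm φ.hom ∘ₗ g)), ?_⟩
  ext1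
  change BalTensor.homEquiv _ ∘ₗ (LinearMap.ker p).subtype = _
  rw [← BalTensor.homEquiv_comp_balMap, LinearMap.comp_assoc, hg, LinearMap.comp_id,
    Equiv.apply_symm_apply]

end rightHomAcyclic

end RightHomAcyclic

section HomFiniteProjective

open Abelian

variable (R : Type) [CommRing R] {A : Type} [Ring A] [Algebra R A]

/-- `Ext¹_A(M, N) = 0` and `Hom_A(M, N)` is a finitely generated projective `R`-module, for the
`R`-module structure inherited from `N`. Objects of `ModuleCat A` carry no chosen `R`-module
structure, whence the quantification over the structures compatible with that over `A`. -/
def HomFiniteProjective (M N : ModuleCat.{0} A) : Prop :=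
  Subsingleton (Ext M N 1) ∧
    ∀ [Module R N] [IsScalarTower R A N], FiniteProjective R (M →ₗ[A] N)

namespace HomFiniteProjective

variable {R} in
lemma of_module {M N : ModuleCat.{0} A} [hR : Module R N] [IsScalarTower R A N]
    (hExt : Subsingleton (Ext M N 1)) (hHom : FiniteProjective R (M →ₗ[A] N)) :
    HomFiniteProjective R M N := by
  refine ⟨hExt, @fun hR' _ => ?_⟩
  obtain rfl : hR = hR' := Module.ext' _ _ fun r x =>
    (let _ := hR; algebraMap_smul A r x).symm.trans (let _ := hR'; algebraMap_smul A r x)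
  exact hHom

section Left

variable (N : ModuleCat.{0} A)

instance : ObjectProperty.IsClosedUnderExtensions (HomFiniteProjective R · N) where
  prop_X₂_of_shortExact {S} hS h₁ h₃ := by
    have := h₁.1
    have := h₃.1
    have := hS.epi_g
    refine ⟨subsingleton_ext_of_shortExact_left hS, fun {_ _} => ?_⟩
    refine h₃.2.of_exact h₁.2 (f := .lcomp R N S.g.hom) (g := .lcomp R N S.f.hom)
      (LinearMap.lcomp_injective_of_surjective _ hS.moduleCat_surjective_g)
      (fun φ => ⟨fun hφ => ?_, ?_⟩) fun φ => ?_
    · exact ⟨(hS.exact.desc (ModuleCat.ofHom φ) (ModuleCat.hom_ext hφ)).hom,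
        congrArg ModuleCat.Hom.hom (hS.exact.g_desc _ _)⟩
    · rintro ⟨ψ, rfl⟩
      exact LinearMap.ext fun x => (congrArg ψ (S.zero_apply x)).trans (map_zero ψ)
    · obtain ⟨ψ, hψ⟩ := exists_f_comp_eq_of_subsingleton_ext hS (ModuleCat.ofHom φ)
      exact ⟨ψ.hom, congrArg ModuleCat.Hom.hom hψ⟩

instance : ObjectProperty.IsStableUnderRetracts (HomFiniteProjective R · N) where
  of_retract r h :=
    have := h.1
    ⟨subsingleton_ext_of_retract_left r, h.2.of_leftInverse (.lcomp R N r.r.hom)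
      (.lcomp R N r.i.hom) (LinearMap.ext fun φ => LinearMap.ext fun x =>
        congrArg φ (ConcreteCategory.congr_hom r.retract x))⟩

instance : ObjectProperty.ContainsZero (HomFiniteProjective R · N) where
  exists_zero :=
    have h := ModuleCat.isZero_of_subsingleton (.of A PUnit)
    have := h.projective
    ⟨_, h, Ext.subsingleton_of_projective _ _ _, inferInstance, inferInstance⟩

end Left

section Right

variable (M : ModuleCat.{0} A)

instance : ObjectProperty.IsClosedUnderExtensions (HomFiniteProjective R M) where
  prop_X₂_of_shortExact {S} hS h₁ h₃ := by
    have := h₁.1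
    have := h₃.1
    have := hS.mono_f
    refine ⟨subsingleton_ext_of_shortExact_right hS, fun {_ _} => ?_⟩
    let : Module R S.X₁ := Module.compHom _ (algebraMap R A)
    have : IsScalarTower R A S.X₁ := .of_algebraMap_smul fun _ _ => rfl
    let : Module R S.X₃ := Module.compHom _ (algebraMap R A)
    have : IsScalarTower R A S.X₃ := .of_algebraMap_smul fun _ _ => rfl
    refine h₁.2.of_exact h₃.2 (f := S.f.hom.compRight R) (g := S.g.hom.compRight R)
      (fun φ ψ hφψ => LinearMap.ext fun x =>
        hS.moduleCat_injective_f (LinearMap.congr_fun hφψ x))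
      (fun φ => ⟨fun hφ => ?_, ?_⟩) fun φ => ?_
    · exact ⟨(hS.exact.lift (ModuleCat.ofHom φ) (ModuleCat.hom_ext hφ)).hom,
        congrArg ModuleCat.Hom.hom (hS.exact.lift_f _ _)⟩
    · rintro ⟨ψ, rfl⟩
      exact LinearMap.ext fun x => S.zero_apply (ψ x)
    · obtain ⟨ψ, hψ⟩ := exists_comp_g_eq_of_subsingleton_ext hS (ModuleCat.ofHom φ)
      exact ⟨ψ.hom, congrArg ModuleCat.Hom.hom hψ⟩

instance : ObjectProperty.IsStableUnderRetracts (HomFiniteProjective R M) where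
  of_retract {N N'} r h := by
    have := h.1
    refine ⟨subsingleton_ext_of_retract_right r, fun {_ _} => ?_⟩
    let : Module R N' := Module.compHom _ (algebraMap R A)
    have : IsScalarTower R A N' := .of_algebraMap_smul fun _ _ => rfl
    exact h.2.of_leftInverse (r.i.hom.compRight R) (r.r.hom.compRight R)
      (LinearMap.ext fun φ => LinearMap.ext fun x =>
        ConcreteCategory.congr_hom r.retract (φ x))

instance : ObjectProperty.ContainsZero (HomFiniteProjective R M) where
  exists_zero :=
    have h := ModuleCat.isZero_of_subsingleton (.of A PUnit)
    have := h.injective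
    ⟨_, h, Ext.subsingleton_of_injective _ _ _, inferInstance, inferInstance⟩

end Right

end HomFiniteProjective

end HomFiniteProjective

section QuasiHereditary

variable {R : Type} [CommRing R] {A : Type} [Ring A] [Algebra R A] {Λ : Type} [PartialOrder Λ]
  {Δ : Λ → Type} [∀ l, AddCommGroup (Δ l)] [∀ l, Module R (Δ l)] [∀ l, Module A (Δ l)]
  [∀ l, IsScalarTower R A (Δ l)]

namespace SplitQH

lemma prop_algebra [Finite Λ] (h : SplitQH R A Λ Δ) (P : ObjectProperty (ModuleCat.{0} A))
    [P.IsClosedUnderExtensions] [P.IsStableUnderRetracts] [P.ContainsZero]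
    (hΔ : ∀ l, P (.of A (Δ l))) : P (.of A A) :=
  prop_of_inAdd P (h.add_gen (.of A A) inferInstance inferInstance) <| prop_pi P _ fun l =>
    prop_of_ker_of_surjective P (h.epi_surj l) (prop_of_inFilt P (h.ker_filt l) fun m _ => hΔ m)
      (hΔ l)

lemma rightHomAcyclic_standard [WellFoundedGT Λ] (h : SplitQH R A Λ Δ) {X : Type} [AddCommGroup X]
    [Module R X] [Module Aᵐᵒᵖ X] [IsScalarTower R Aᵐᵒᵖ X] (hX : FiniteProjective R X)
    (hExt : ∀ l, Subsingleton
      (Abelian.Ext (ModuleCat.of A (Δ l)) (ModuleCat.of A (RightHom R X R)) 1)) (l : Λ) :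
    rightHomAcyclic R X (.of A (Δ l)) := by
  induction l using WellFoundedGT.induction with
  | ind l ih =>
    let : Module R (h.P l) := Module.compHom _ (algebraMap R A)
    have : IsScalarTower R A (h.P l) := .of_algebraMap_smul fun _ _ => rfl
    have := h.algFin
    have := h.P_proj l
    have := (h.ker_filt l).1
    exact .of_ker hX (h.epi_surj l) (prop_of_inFilt _ (h.ker_filt l) ih)

end SplitQH

lemma IsCostandard.finiteProjective_hom {Nb : Λ → Type} [∀ l, AddCommGroup (Nb l)]
    [∀ l, Module R (Nb l)] [∀ l, Module A (Nb l)] [∀ l, IsScalarTower R A (Nb l)]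
    (hc : IsCostandard R A Λ Δ Nb) (l m : Λ) : FiniteProjective R (Δ l →ₗ[A] Nb m) := by
  rcases eq_or_ne l m with rfl | hlm
  · exact FiniteProjective.of_equiv ⟨inferInstance, inferInstance⟩ (hc.2.1 l).some
  · have := subsingleton_of_forall_eq 0 (hc.2.2.1 l m hlm)
    exact ⟨inferInstance, inferInstance⟩

end QuasiHereditary

theorem tensor_of_dual_costandard_with_standard_filtered_general
    (R : Type) [CommRing R] (A : Type) [Ring A] [Algebra R A]
    (Λ : Type) [Finite Λ] [PartialOrder Λ]
    (Δ : Λ → Type) [∀ l, AddCommGroup (Δ l)] [∀ l, Module R (Δ l)]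
    [∀ l, Module A (Δ l)] [∀ l, IsScalarTower R A (Δ l)]
    (Nb : Λ → Type) [∀ l, AddCommGroup (Nb l)] [∀ l, Module R (Nb l)]
    [∀ l, Module A (Nb l)] [∀ l, IsScalarTower R A (Nb l)]
    (h : SplitQH R A Λ Δ) (hHom : ∀ l m, FiniteProjective R (Δ l →ₗ[A] Nb m))
    (hExt : ∀ l m, extVanish A (Δ l) (Nb m) 1)
    (M : Type) [AddCommGroup M] [Module R M] [Module A M] [IsScalarTower R A M]
    (N : Type) [AddCommGroup N] [Module R N] [Module A N] [IsScalarTower R A N]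
    (hM : InFilt R A Λ Δ Set.univ M) (hN : InFilt R A Λ Nb Set.univ N) :
    FiniteProjective R (BalTensor R A (N →ₗ[R] R) M) ∧
    (∀ (P : ℕ → Type) [∀ i, AddCommGroup (P i)] [∀ i, Module R (P i)]
      [∀ i, Module A (P i)] [∀ i, IsScalarTower R A (P i)]
      (_ : ∀ i, Module.Projective A (P i))
      (d : ∀ i : ℕ, P (i + 1) →ₗ[A] P i) (ε : P 0 →ₗ[A] M),
      Function.Surjective ε → Function.Exact (d 0) ε →
      (∀ i : ℕ, Function.Exact (d (i + 1)) (d i)) →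
      ∀ i : ℕ, Function.Exact (balMap R A (N →ₗ[R] R) (d (i + 1)))
        (balMap R A (N →ₗ[R] R) (d i))) ∧
    FiniteProjective R (M →ₗ[A] N) := by
  have hΔNb (l m : Λ) : HomFiniteProjective R (.of A (Δ l)) (.of A (Nb m)) :=
    .of_module (N := .of A (Nb m)) (hExt l m).subsingleton_ext (hHom l m)
  have hΔN (l : Λ) : HomFiniteProjective R (.of A (Δ l)) (.of A N) :=
    prop_of_inFilt (HomFiniteProjective R (.of A (Δ l))) hN fun m _ => hΔNb l m
  have hNfin : FiniteProjective R N :=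
    (h.prop_algebra (HomFiniteProjective R · (.of A N)) hΔN).2.of_equiv
      (LinearMap.ringLmapEquivSelf A R N).symm
  have hD : FiniteProjective R (N →ₗ[R] R) := hNfin.dual
  have hExtD (l : Λ) : Subsingleton
      (Abelian.Ext (ModuleCat.of A (Δ l)) (ModuleCat.of A (RightHom R (N →ₗ[R] R) R)) 1) :=
    have := (hΔN l).1
    subsingleton_ext_of_retract_right (.ofIso (RightHom.evalEquiv N hNfin).toModuleIso.symm)
  have hMD : rightHomAcyclic R (N →ₗ[R] R) (.of A M) :=
    prop_of_inFilt _ hM fun l _ => h.rightHomAcyclic_standard hD hExtD l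
  have := h.algFin
  have := hD.1
  have := hD.2
  have := hM.1
  have := Module.Finite.trans (R := R) A M
  exact ⟨⟨BalTensor.finite _, hMD.projective_balTensor⟩,
    fun P _ _ _ _ _ d ε hε h₀ hd => hMD.exact_balMap_resolution hε h₀ hd,
    (prop_of_inFilt (HomFiniteProjective R · (.of A N)) hM fun l _ => hΔN l).2⟩

/-- If `M ∈ F(Δ̃)` and `N ∈ F(∇̃)`, then `DN ⊗_A M` is a finitely
generated projective `R`-module and `Tor^A_i(DN, M) = 0` for all `i > 0` (expressed by:
applying `DN ⊗_A −` to any projective resolution of `M` yields a complex which is exact at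
all positive spots). In particular `Hom_A(M, N)` is a finitely generated projective
`R`-module. -/
theorem tensor_of_dual_costandard_with_standard_filtered
    (R : Type) [CommRing R] [IsNoetherianRing R]
    (A : Type) [Ring A] [Algebra R A]
    (Λ : Type) [Fintype Λ] [PartialOrder Λ]
    (Δ : Λ → Type) [∀ l, AddCommGroup (Δ l)] [∀ l, Module R (Δ l)]
    [∀ l, Module A (Δ l)] [∀ l, IsScalarTower R A (Δ l)]
    (Nb : Λ → Type) [∀ l, AddCommGroup (Nb l)] [∀ l, Module R (Nb l)]
    [∀ l, Module A (Nb l)] [∀ l, IsScalarTower R A (Nb l)]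
    (h : SplitQH R A Λ Δ) (hc : IsCostandard R A Λ Δ Nb)
    (M : Type) [AddCommGroup M] [Module R M] [Module A M] [IsScalarTower R A M]
    (N : Type) [AddCommGroup N] [Module R N] [Module A N] [IsScalarTower R A N]
    (hM : InFilt R A Λ Δ Set.univ M) (hN : InFilt R A Λ Nb Set.univ N) :
    -- `DN ⊗_A M` is a finitely generated projective `R`-module
    (Module.Finite R (BalTensor R A (N →ₗ[R] R) M) ∧
      Module.Projective R (BalTensor R A (N →ₗ[R] R) M)) ∧
    -- `Tor^A_i(DN, M) = 0` for all `i > 0`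
    (∀ (P : ℕ → Type) [∀ i, AddCommGroup (P i)] [∀ i, Module R (P i)]
      [∀ i, Module A (P i)] [∀ i, IsScalarTower R A (P i)]
      (_ : ∀ i, Module.Projective A (P i))
      (d : ∀ i : ℕ, P (i + 1) →ₗ[A] P i) (ε : P 0 →ₗ[A] M),
      Function.Surjective ε → Function.Exact (d 0) ε →
      (∀ i : ℕ, Function.Exact (d (i + 1)) (d i)) →
      ∀ i : ℕ, Function.Exact (balMap R A (N →ₗ[R] R) (d (i + 1)))
        (balMap R A (N →ₗ[R] R) (d i))) ∧
    -- in particular, `Hom_A(M, N)` is a finitely generated projective `R`-module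
    (Module.Finite R (M →ₗ[A] N) ∧ Module.Projective R (M →ₗ[A] N)) :=
  tensor_of_dual_costandard_with_standard_filtered_general R A Λ Δ Nb h hc.finiteProjective_hom
    (fun l m => hc.2.2.2 l m 1 one_pos) M N hM hN

end
end

section
/- Let (A, {Δ(λ)}) be a split quasi-hereditary algebra over a commutative Noetherian ring R and M a finitely generated A-module. Then M ∈ F(Δ̃) if and only if M is projective over R and M(𝔪) := M/𝔪M belongs to F(Δ(𝔪)) over A(𝔪) := A/𝔪A for every maximal ideal 𝔪 of R. -/
open scoped TensorProduct
open CategoryTheory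

noncomputable section

section Fiber

variable (R : Type) [CommRing R] (A : Type) [Ring A] [Algebra R A]

/-- The `A`-submodule `I·M` of `M`, for an ideal `I` of `R`. -/
def idealSub (I : Ideal R) (M : Type) [AddCommGroup M] [Module R M] [Module A M] :
    Submodule A M :=
  Submodule.span A {x : M | ∃ r ∈ I, ∃ m : M, x = r • m}

/-- The fibre `M(I) = M / I·M` of `M` at an ideal `I` of `R`, as an `A`-module;
for `I` maximal this is the corresponding module over `A(I) = A/IA`. -/
abbrev Fiber (I : Ideal R) (M : Type) [AddCommGroup M] [Module R M] [Module A M] : Type :=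
  M ⧸ idealSub R A I M

end Fiber

/-
A filtration with `R`-projective factors splits over `R`, so it stays exact on every fibre; this
gives one direction. Conversely, let `λ` be maximal among the labels occurring in the filtrations of
the fibres `M(𝔪)`. Then every `A`-linear map `P(λ) → M(𝔪)` factors through `Δ(λ)`, so forming
`Hom_A(Δ(λ), M)` commutes with passing to fibres, and on each fibre the evaluation map
`Δ(λ) ⊗ Hom_A(Δ(λ), M) → M` is injective with cokernel filtered by the remaining `Δ(μ)(𝔪)`. By
Nakayama's lemma the evaluation map itself is split injective over `R`. Its cokernel is therefore
`R`-projective, and one inducts on the number of labels.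
-/

section Filtrations

universe u v

section Exact

variable {A M' M M'' N : Type*} [Ring A] [AddCommGroup M'] [Module A M'] [AddCommGroup M]
  [Module A M] [AddCommGroup M''] [Module A M''] [AddCommGroup N] [Module A N]

lemma exists_lift_of_exact {i : M' →ₗ[A] M} {p : M →ₗ[A] M''} (hi : Function.Injective i)
    (hip : Function.Exact i p) {f : N →ₗ[A] M} (hf : p ∘ₗ f = 0) :
    ∃ f' : N →ₗ[A] M', i ∘ₗ f' = f := by
  have hrange (x : N) : f x ∈ LinearMap.range i := (hip _).1 (LinearMap.congr_fun hf x)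
  refine ⟨(LinearEquiv.ofInjective i hi).symm ∘ₗ f.codRestrict _ hrange, ?_⟩
  ext x
  exact congrArg Subtype.val ((LinearEquiv.ofInjective i hi).apply_symm_apply ⟨f x, hrange x⟩)

lemma exists_desc_of_exact {i : M' →ₗ[A] M} {p : M →ₗ[A] M''} (hp : Function.Surjective p)
    (hip : Function.Exact i p) {f : M →ₗ[A] N} (hf : f ∘ₗ i = 0) :
    ∃ f' : M'' →ₗ[A] N, f' ∘ₗ p = f := by
  have hker : LinearMap.ker p ≤ LinearMap.ker f := by
    rwa [hip.linearMap_ker_eq, LinearMap.range_le_ker_iff]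
  refine ⟨(LinearMap.ker p).liftQ f hker ∘ₗ (p.quotKerEquivOfSurjective hp).symm, ?_⟩
  ext x
  have hx : (p.quotKerEquivOfSurjective hp).symm (p x) = (LinearMap.ker p).mkQ x :=
    (LinearEquiv.symm_apply_eq _).2 rfl
  simp [hx]

lemma nonempty_equiv_of_ker_eq {f : M →ₗ[A] M'} {g : M →ₗ[A] M''}
    (hf : Function.Surjective f) (hg : Function.Surjective g)
    (h : LinearMap.ker f = LinearMap.ker g) : Nonempty (M' ≃ₗ[A] M'') :=
  ⟨(f.quotKerEquivOfSurjective hf).symm ≪≫ₗ Submodule.quotEquivOfEq _ _ h ≪≫ₗ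
    g.quotKerEquivOfSurjective hg⟩

lemma exists_equiv_prod_of_exact [Module.Projective A M''] {f : M' →ₗ[A] M} {g : M →ₗ[A] M''}
    (hf : Function.Injective f) (hg : Function.Surjective g) (hfg : Function.Exact f g) :
    ∃ e : M ≃ₗ[A] M' × M'', f = e.symm ∘ₗ LinearMap.inl A M' M'' ∧
      g = LinearMap.snd A M' M'' ∘ₗ e := by
  obtain ⟨s, hs⟩ := Module.projective_lifting_property g LinearMap.id hg
  exact ⟨_, (hfg.splitSurjectiveEquiv hf ⟨s, hs⟩).2⟩

end Exact

/-- Modules with a finite filtration all of whose factors satisfy `X`, built up by extensions.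
Unlike a chain of submodules, this description lends itself to induction. -/
inductive Filt {A : Type u} [Ring A]
    (X : ∀ (M : Type v) [AddCommGroup M] [Module A M], Prop) :
    ∀ (M : Type v) [AddCommGroup M] [Module A M], Prop
  | zero (M : Type v) [AddCommGroup M] [Module A M] [Subsingleton M] : Filt X M
  | ext {M' M M'' : Type v} [AddCommGroup M'] [Module A M'] [AddCommGroup M] [Module A M]
      [AddCommGroup M''] [Module A M''] {f : M' →ₗ[A] M} {g : M →ₗ[A] M''}
      (hf : Function.Injective f) (hg : Function.Surjective g) (hfg : Function.Exact f g)
      (h' : Filt X M') (h'' : X M'') : Filt X M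

variable {A : Type u} [Ring A] {X : ∀ (M : Type v) [AddCommGroup M] [Module A M], Prop}
  {M' M M'' : Type v} [AddCommGroup M'] [Module A M'] [AddCommGroup M] [Module A M]
  [AddCommGroup M''] [Module A M'']

namespace Filt

lemma of_equiv (h : Filt X M) (e : M ≃ₗ[A] M') : Filt X M' := by
  cases h with
  | zero =>
    have := e.symm.subsingleton
    exact .zero M'
  | ext hf hg hfg h' h'' =>
    exact .ext (f := e.toLinearMap ∘ₗ _) (g := _ ∘ₗ e.symm.toLinearMap) (e.injective.comp hf)
      (hg.comp e.symm.surjective) ((LinearEquiv.conj_exact_iff_exact _ _ e).2 hfg) h' h''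

lemma of (h : X M) : Filt X M :=
  .ext (M' := PUnit) (f := 0) (g := LinearMap.id) (Function.injective_of_subsingleton _)
    Function.surjective_id ((LinearMap.exact_zero_iff_injective _ _).2 Function.injective_id)
    (.zero _) h

lemma mono {Y : ∀ (M : Type v) [AddCommGroup M] [Module A M], Prop}
    (hXY : ∀ (M : Type v) [AddCommGroup M] [Module A M], X M → Y M) (h : Filt X M) :
    Filt Y M := by
  induction h with
  | zero => exact .zero _
  | ext hf hg hfg _ h'' ih => exact .ext hf hg hfg ih (hXY _ h'')

lemma of_exact {f : M' →ₗ[A] M} {g : M →ₗ[A] M''} (hf : Function.Injective f)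
    (hg : Function.Surjective g) (hfg : Function.Exact f g) (h' : Filt X M') (h'' : Filt X M'') :
    Filt X M := by
  induction h'' generalizing M with
  | zero =>
    refine h'.of_equiv (LinearEquiv.ofBijective f ⟨hf, fun x => ?_⟩)
    exact (hfg x).1 (Subsingleton.elim _ _)
  | @ext Q' Q Q'' _ _ _ _ _ _ i p hi hp hip _ hQ'' ih =>
    let N := LinearMap.ker (p ∘ₗ g)
    have hfN : ∀ x, f x ∈ N := fun x => by simp [N, hfg.apply_apply_eq_zero]
    obtain ⟨g', hg'⟩ := exists_lift_of_exact hi hip (f := g ∘ₗ N.subtype)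
      (LinearMap.ext fun x => x.2)
    replace hg' (x : N) : i (g' x) = g x := LinearMap.congr_fun hg' x
    have hg'_surj : Function.Surjective g' := fun q => by
      obtain ⟨x, hx⟩ := hg (i q)
      have hxN : x ∈ N := by simp [N, hx, hip.apply_apply_eq_zero]
      exact ⟨⟨x, hxN⟩, hi ((hg' _).trans hx)⟩
    have hfg' : Function.Exact (f.codRestrict N hfN) g' := fun x => by
      rw [← map_eq_zero_iff i hi, hg', hfg]
      simp only [Set.mem_range, Subtype.ext_iff, LinearMap.codRestrict_apply]
    have hN : Filt X N := ih ((LinearMap.injective_codRestrict_iff _).2 hf) hg'_surj hfg'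
    exact .ext N.subtype_injective (hp.comp hg)
      (LinearMap.exact_subtype_ker_map _) hN hQ''

lemma pi (h : Filt X M) : ∀ n, Filt X (Fin n → M)
  | 0 => .zero _
  | n + 1 =>
    (of_exact LinearMap.inl_injective LinearMap.snd_surjective .inl_snd h (h.pi n)).of_equiv
      (Fin.consLinearEquiv A fun _ => M)

lemma hom_eq_zero_right {N : Type*} [AddCommGroup N] [Module A N]
    (hX : ∀ (Y : Type v) [AddCommGroup Y] [Module A Y], X Y → ∀ f : N →ₗ[A] Y, f = 0)
    (h : Filt X M) (f : N →ₗ[A] M) : f = 0 := by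
  induction h with
  | zero => exact Subsingleton.elim _ _
  | ext hi _ hip _ h'' ih =>
    obtain ⟨f', rfl⟩ := exists_lift_of_exact hi hip (hX _ h'' (_ ∘ₗ f))
    rw [ih f', LinearMap.comp_zero]

lemma hom_eq_zero_left {N : Type*} [AddCommGroup N] [Module A N]
    (hX : ∀ (Y : Type v) [AddCommGroup Y] [Module A Y], X Y → ∀ f : Y →ₗ[A] N, f = 0)
    (h : Filt X M) (f : M →ₗ[A] N) : f = 0 := by
  induction h with
  | zero => exact Subsingleton.elim _ _
  | ext _ hp hip _ h'' ih =>
    obtain ⟨f', rfl⟩ := exists_desc_of_exact hp hip (ih (f ∘ₗ _))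
    rw [hX _ h'' f', LinearMap.zero_comp]

/-- Induction along a filtration of modules over an `R`-algebra, in which every module that occurs
is also an `R`-module, through `algebraMap R A`. -/
lemma induction_tower (R : Type*) [CommRing R] [Algebra R A]
    {motive : ∀ (M : Type v) [AddCommGroup M] [Module R M] [Module A M] [IsScalarTower R A M], Prop}
    (zero : ∀ (M : Type v) [AddCommGroup M] [Module R M] [Module A M] [IsScalarTower R A M]
      [Subsingleton M], motive M)
    (ext : ∀ {M' M M'' : Type v} [AddCommGroup M'] [Module R M'] [Module A M']
      [IsScalarTower R A M'] [AddCommGroup M] [Module R M] [Module A M] [IsScalarTower R A M]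
      [AddCommGroup M''] [Module R M''] [Module A M''] [IsScalarTower R A M'']
      (f : M' →ₗ[A] M) (g : M →ₗ[A] M''), Function.Injective f → Function.Surjective g →
      Function.Exact f g → Filt X M' → X M'' → motive M' → motive M)
    (h : Filt X M) [Module R M] [IsScalarTower R A M] : motive M := by
  revert ‹Module R M›
  induction h with
  | zero => intro _ _; exact zero _
  | @ext M' _ M'' _ _ _ _ _ _ f g hf hg hfg h' h'' ih =>
    intro _ _
    let _ : Module R M' := .compHom M' (algebraMap R A)
    let _ : Module R M'' := .compHom M'' (algebraMap R A)
    have : IsScalarTower R A M' := .of_compHom R A M'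
    have : IsScalarTower R A M'' := .of_compHom R A M''
    exact ext f g hf hg hfg h' h'' ih

end Filt

/-- `N` is the top of a finite chain of submodules starting at `⊥` whose factors satisfy `X`. -/
def HasChain (X : ∀ (M : Type v) [AddCommGroup M] [Module A M], Prop) (N : Submodule A M) : Prop :=
  ∃ (n : ℕ) (c : Fin (n + 1) → Submodule A M), c 0 = ⊥ ∧ c (Fin.last n) = N ∧ Monotone c ∧
    ∀ i : Fin n, X (↥(c i.succ) ⧸ (c i.castSucc).comap (c i.succ).subtype)

lemma HasChain.filt {N : Submodule A M} (h : HasChain X N) : Filt X N := by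
  obtain ⟨n, c, hbot, rfl, hmono, hc⟩ := h
  induction Fin.last n using Fin.induction with
  | zero => rw [hbot]; exact .zero _
  | succ i ih =>
    refine .ext (Submodule.inclusion_injective (hmono (Fin.castSucc_le_succ i)))
      (Submodule.mkQ_surjective _) (LinearMap.exact_iff.2 ?_) ih (hc i)
    rw [Submodule.ker_mkQ, Submodule.range_inclusion]

lemma HasChain.snoc {N N' : Submodule A M} (h : HasChain X N) (hle : N ≤ N')
    (hX : X (↥N' ⧸ N.comap N'.subtype)) : HasChain X N' := by
  obtain ⟨n, c, hbot, rfl, hmono, hc⟩ := h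
  refine ⟨n + 1, Fin.snoc (α := fun _ => Submodule A M) c N', ?_, Fin.snoc_last .., ?_, ?_⟩
  · rw [← Fin.castSucc_zero, Fin.snoc_castSucc, hbot]
  · refine Fin.monotone_iff_le_succ.2 (Fin.lastCases ?_ fun i => ?_)
    · rwa [Fin.snoc_castSucc, Fin.succ_last, Fin.snoc_last]
    · rw [Fin.snoc_castSucc, Fin.succ_castSucc, Fin.snoc_castSucc]
      exact hmono (Fin.castSucc_le_succ i)
  · refine Fin.lastCases ?_ fun i => ?_
    · rwa [Fin.snoc_castSucc, Fin.succ_last, Fin.snoc_last]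
    · rw [Fin.snoc_castSucc, Fin.succ_castSucc, Fin.snoc_castSucc]
      exact hc i

lemma Filt.hasChain_range
    (hX : ∀ {M N : Type v} [AddCommGroup M] [Module A M] [AddCommGroup N] [Module A N],
      (M ≃ₗ[A] N) → X M → X N) (h : Filt X M) {V : Type v} [AddCommGroup V] [Module A V]
    {j : M →ₗ[A] V} (hj : Function.Injective j) : HasChain X (LinearMap.range j) := by
  induction h with
  | zero =>
    refine ⟨0, fun _ => ⊥, rfl, ?_, monotone_const, fun i => i.elim0⟩
    rw [Subsingleton.elim j 0, LinearMap.range_zero]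
  | @ext _ _ _ _ _ _ _ _ _ f g hf hg hfg _ h'' ih =>
    have hchain : HasChain X (LinearMap.range (j ∘ₗ f)) := ih (hj.comp hf)
    refine hchain.snoc (LinearMap.range_comp_le_range f j) ?_
    obtain ⟨e⟩ := nonempty_equiv_of_ker_eq hg
      (g := Submodule.mkQ ((LinearMap.range (j ∘ₗ f)).comap (LinearMap.range j).subtype) ∘ₗ
        j.rangeRestrict)
      ((Submodule.mkQ_surjective _).comp j.surjective_rangeRestrict) (by
        ext x
        simp [hfg.linearMap_ker_eq, hj.eq_iff])
    exact hX e h''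

lemma hasChain_top_iff
    (hX : ∀ {M N : Type v} [AddCommGroup M] [Module A M] [AddCommGroup N] [Module A N],
      (M ≃ₗ[A] N) → X M → X N) : HasChain X (⊤ : Submodule A M) ↔ Filt X M :=
  ⟨fun h => h.filt.of_equiv Submodule.topEquiv, fun h => by
    simpa using h.hasChain_range hX (j := LinearMap.id) Function.injective_id⟩

end Filtrations

section CommutativeAlgebra

open Submodule (smul_top_le_comap_smul_top)

variable {R : Type*} [CommRing R] {M N : Type*} [AddCommGroup M] [Module R M] [AddCommGroup N]
  [Module R N]

lemma subsingleton_of_smul_top_eq_top [Module.Finite R M]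
    (h : ∀ I : Ideal R, I.IsMaximal → I • (⊤ : Submodule R M) = ⊤) : Subsingleton M := by
  by_contra hM
  obtain ⟨I, hI, hle⟩ :=
    Ideal.exists_le_maximal _ (mt (Module.annihilator_eq_top_iff (R := R)).1 hM)
  obtain ⟨r, hr, hrM⟩ := Submodule.exists_sub_one_mem_and_smul_eq_zero_of_fg_of_le_smul I
    (⊤ : Submodule R M) Module.Finite.fg_top (h I hI).ge
  have hrI : r ∈ I := hle (Module.mem_annihilator.2 fun x => hrM x trivial)
  refine hI.ne_top ((Ideal.eq_top_iff_one I).2 ?_)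
  simpa using I.sub_mem hrI hr

lemma surjective_of_forall_maximal [Module.Finite R N] (f : M →ₗ[R] N)
    (h : ∀ I : Ideal R, I.IsMaximal → ∀ y, ∃ x, y - f x ∈ I • (⊤ : Submodule R N)) :
    Function.Surjective f := by
  rw [← LinearMap.range_eq_top, ← Submodule.Quotient.subsingleton_iff]
  refine subsingleton_of_smul_top_eq_top (R := R) fun I hI => Submodule.eq_top_iff'.2 fun z => ?_
  obtain ⟨y, rfl⟩ := Submodule.mkQ_surjective _ z
  obtain ⟨x, hx⟩ := h I hI y
  have hfx : (LinearMap.range f).mkQ (f x) = 0 := (Submodule.Quotient.mk_eq_zero _).2 ⟨x, rfl⟩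
  simpa only [Submodule.mem_comap, map_sub, hfx, sub_zero] using
    smul_top_le_comap_smul_top I (LinearMap.range f).mkQ hx

lemma lTensor_eq_zero_iff_mem_smul_top (D : Type*) [AddCommGroup D] [Module R D] {I : Ideal R}
    {q : M →ₗ[R] N} (hq : Function.Surjective q) (hker : LinearMap.ker q = I • ⊤) (z : D ⊗[R] M) :
    q.lTensor D z = 0 ↔ z ∈ I • (⊤ : Submodule R (D ⊗[R] M)) := by
  constructor
  · intro hz
    have hexact : Function.Exact (LinearMap.ker q).subtype q := LinearMap.exact_subtype_ker_map q
    obtain ⟨w, rfl⟩ := (lTensor_exact D hexact hq z).1 hz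
    clear hz
    induction w with
    | zero => simp
    | add w w' hw hw' => rw [map_add]; exact add_mem hw hw'
    | tmul d x => exact smul_top_le_comap_smul_top I (TensorProduct.mk R D M d) (hker ▸ x.2)
  · intro hz
    refine Submodule.smul_induction_on hz (fun r hr w _ => ?_) fun w w' hw hw' => ?_
    · have hrq : r • q = 0 := LinearMap.ext fun x => by
        rw [LinearMap.smul_apply, ← map_smul]
        exact hker.ge (Submodule.smul_mem_smul hr trivial)
      rw [map_smul, ← LinearMap.smul_apply, ← LinearMap.lTensor_smul, hrq, LinearMap.lTensor_zero,
        LinearMap.zero_apply]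
    · rw [map_add, hw, hw', add_zero]

section Hom

variable {A : Type*} [Ring A] [Algebra R A] {P : Type*} [AddCommGroup P] [Module A P]
  [Module.Finite A P] [Module.Projective A P] [Module A M] [IsScalarTower R A M]

variable (R M A P) in
lemma exists_section_of_eval :
    ∃ (n : ℕ) (p : Fin n → P) (e : (Fin n → M) →ₗ[R] (P →ₗ[A] M)),
      ∀ f : P →ₗ[A] M, e (fun i => f (p i)) = f := by
  obtain ⟨n, π, hπ⟩ := Module.Finite.exists_fin' A P
  obtain ⟨σ, hσ⟩ := Module.projective_lifting_property π LinearMap.id hπ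
  let b := Pi.basisFun A (Fin n)
  refine ⟨n, fun i => π (b i), σ.lcomp R M ∘ₗ (b.constr R).toLinearMap, fun f => ?_⟩
  have hb : b.constr R (fun i => f (π (b i))) = f ∘ₗ π := b.ext fun i => b.constr_basis R _ i
  ext p
  simpa [hb] using congrArg f (LinearMap.congr_fun hσ p)

lemma finite_linearMap_of_projective [Module.Finite R M] : Module.Finite R (P →ₗ[A] M) := by
  obtain ⟨n, p, e, he⟩ := exists_section_of_eval R M A P
  exact .of_surjective e fun f => ⟨_, he f⟩

lemma projective_linearMap_of_projective [Module.Projective R M] :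
    Module.Projective R (P →ₗ[A] M) := by
  obtain ⟨n, p, e, he⟩ := exists_section_of_eval R M A P
  let ev : (P →ₗ[A] M) →ₗ[R] (Fin n → M) := LinearMap.pi fun i => LinearMap.applyₗ' R (p i)
  have : Module.Projective R (Fin n → M) :=
    .of_equiv (DFinsupp.linearEquivFunOnFintype (R := R) (M := fun _ : Fin n => M))
  exact .of_split ev e (LinearMap.ext he)

lemma linearMap_mem_smul_top {I : Ideal R} {f : P →ₗ[A] M}
    (hf : ∀ p, f p ∈ I • (⊤ : Submodule R M)) : f ∈ I • (⊤ : Submodule R (P →ₗ[A] M)) := by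
  obtain ⟨n, p, e, he⟩ := exists_section_of_eval R M A P
  rw [← he f]
  refine smul_top_le_comap_smul_top I e ?_
  rw [← Finset.univ_sum_single fun i => f (p i)]
  exact sum_mem fun i _ =>
    smul_top_le_comap_smul_top I (LinearMap.single R (fun _ => M) i) (hf (p i))

end Hom

variable [Module.Projective R M]

lemma exists_retraction_mod (I : Ideal R) [I.IsMaximal] {t : N →ₗ[R] M}
    (ht : ∀ z, t z ∈ I • (⊤ : Submodule R M) → z ∈ I • (⊤ : Submodule R N)) :
    ∃ u : M →ₗ[R] N, ∀ z, z - u (t z) ∈ I • (⊤ : Submodule R N) := by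
  let _ := Ideal.Quotient.field I
  let tI : (N ⧸ I • (⊤ : Submodule R N)) →ₗ[R ⧸ I] (M ⧸ I • (⊤ : Submodule R M)) :=
    (Submodule.mapQ _ _ t (smul_top_le_comap_smul_top I t)).extendScalarsOfSurjective
      Ideal.Quotient.mk_surjective
  have htI : LinearMap.ker tI = ⊥ := LinearMap.ker_eq_bot'.2 fun x hx => by
    obtain ⟨z, rfl⟩ := Submodule.mkQ_surjective _ x
    exact (Submodule.Quotient.mk_eq_zero _).2 (ht z ((Submodule.Quotient.mk_eq_zero _).1 hx))
  obtain ⟨s, hs⟩ := tI.exists_leftInverse_of_injective htI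
  obtain ⟨u, hu⟩ := Module.projective_lifting_property (Submodule.mkQ _)
    (s.restrictScalars R ∘ₗ Submodule.mkQ _) (Submodule.mkQ_surjective _)
  refine ⟨u, fun z => ?_⟩
  rw [← Submodule.Quotient.eq]
  exact ((LinearMap.congr_fun hu (t z)).trans
    (LinearMap.congr_fun hs (Submodule.Quotient.mk z))).symm

variable [Module.Finite R N] [Module.Projective R N]

lemma exists_retraction_of_forall_maximal {t : N →ₗ[R] M}
    (ht : ∀ I : Ideal R, I.IsMaximal → ∀ z, t z ∈ I • (⊤ : Submodule R M) →
      z ∈ I • (⊤ : Submodule R N)) :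
    ∃ s : M →ₗ[R] N, s ∘ₗ t = LinearMap.id := by
  have : Module.Finite R (N →ₗ[R] N) := finite_linearMap_of_projective
  refine surjective_of_forall_maximal (LinearMap.lcomp R N t) (fun I hI g => ?_) LinearMap.id
  obtain ⟨u, hu⟩ := exists_retraction_mod I (ht I hI)
  refine ⟨g ∘ₗ u, linearMap_mem_smul_top fun z => ?_⟩
  simpa using smul_top_le_comap_smul_top I g (hu z)

lemma injective_and_projective_quotient_range {t : N →ₗ[R] M}
    (ht : ∀ I : Ideal R, I.IsMaximal → ∀ z, t z ∈ I • (⊤ : Submodule R M) →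
      z ∈ I • (⊤ : Submodule R N)) :
    Function.Injective t ∧ Module.Projective R (M ⧸ LinearMap.range t) := by
  obtain ⟨s, hs⟩ := exists_retraction_of_forall_maximal ht
  have ht_inj : Function.Injective t :=
    Function.LeftInverse.injective (g := s) (LinearMap.congr_fun hs)
  have hexact := LinearMap.exact_map_mkQ_range t
  have hsurj := Submodule.mkQ_surjective (LinearMap.range t)
  obtain ⟨σ, hσ⟩ := (hexact.splitSurjectiveEquiv ht_inj).symm
    (hexact.splitInjectiveEquiv hsurj ⟨s, hs⟩)
  exact ⟨ht_inj, .of_split σ _ hσ⟩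

end CommutativeAlgebra

section Fibers

variable {R : Type} [CommRing R] {A : Type} [Ring A] [Algebra R A] {I : Ideal R}
  {M' M M'' : Type} [AddCommGroup M'] [Module R M'] [Module A M'] [IsScalarTower R A M']
  [AddCommGroup M] [Module R M] [Module A M] [IsScalarTower R A M]
  [AddCommGroup M''] [Module R M''] [Module A M''] [IsScalarTower R A M'']

lemma mem_idealSub {x : M} : x ∈ idealSub R A I M ↔ x ∈ I • (⊤ : Submodule R M) := by
  constructor
  · intro hx
    refine Submodule.span_induction ?_ (zero_mem _) (fun _ _ _ _ => add_mem) ?_ hx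
    · rintro _ ⟨r, hr, m, rfl⟩
      exact Submodule.smul_mem_smul hr trivial
    · exact fun a _ _ hx => Submodule.smul_top_le_comap_smul_top I (actL R A M a) hx
  · exact fun hx => Submodule.smul_induction_on hx
      (fun r hr m _ => Submodule.subset_span ⟨r, hr, m, rfl⟩) fun _ _ => add_mem

lemma mkQ_idealSub_eq_zero {x : M} :
    (idealSub R A I M).mkQ x = 0 ↔ x ∈ I • (⊤ : Submodule R M) :=
  (Submodule.Quotient.mk_eq_zero _).trans mem_idealSub

lemma map_idealSub_of_surjective {g : M →ₗ[A] M''} (hg : Function.Surjective g) :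
    (idealSub R A I M).map g = idealSub R A I M'' := by
  rw [idealSub, Submodule.map_span]
  congr 1
  ext y
  constructor
  · rintro ⟨_, ⟨r, hr, m, rfl⟩, rfl⟩
    exact ⟨r, hr, g m, LinearMap.map_smul_of_tower g r m⟩
  · rintro ⟨r, hr, y, rfl⟩
    obtain ⟨m, rfl⟩ := hg y
    exact ⟨r • m, ⟨r, hr, m, rfl⟩, LinearMap.map_smul_of_tower g r m⟩

lemma idealSub_le_comap (g : M →ₗ[A] M'') :
    idealSub R A I M ≤ (idealSub R A I M'').comap g := fun _ hx =>
  mem_idealSub.2 (Submodule.smul_top_le_comap_smul_top I (g.restrictScalars R) (mem_idealSub.1 hx))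

variable (R I) in
/-- The map `M(I) → M''(I)` induced on fibres by an `A`-linear map `M → M''`. -/
def fiberMap (g : M →ₗ[A] M'') : Fiber R A I M →ₗ[A] Fiber R A I M'' :=
  Submodule.mapQ _ _ g (idealSub_le_comap g)

lemma fiberMap_surjective {g : M →ₗ[A] M''} (hg : Function.Surjective g) :
    Function.Surjective (fiberMap R I g) :=
  .of_comp (g := Submodule.mkQ _) ((Submodule.mkQ_surjective _).comp hg)

lemma fiberMap_exact {f : M' →ₗ[A] M} {g : M →ₗ[A] M''} (hg : Function.Surjective g)
    (hfg : Function.Exact f g) : Function.Exact (fiberMap R I f) (fiberMap R I g) :=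
  (hfg.exact_mapQ_iff _ _).2 (by rw [map_idealSub_of_surjective hg]; exact inf_le_right)

lemma fiberMap_injective_of_split {f : M' →ₗ[A] M} {s : M →ₗ[R] M'}
    (hs : s ∘ₗ f.restrictScalars R = LinearMap.id) : Function.Injective (fiberMap R I f) := by
  rw [injective_iff_map_eq_zero]
  intro x hx
  obtain ⟨x, rfl⟩ := Submodule.mkQ_surjective _ x
  rw [mkQ_idealSub_eq_zero, ← LinearMap.id_apply (R := R) x, ← hs]
  exact Submodule.smul_top_le_comap_smul_top I s (mkQ_idealSub_eq_zero.1 hx)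

/-- The isomorphism `M(I) ≃ M''(I)` induced on fibres by an `A`-linear isomorphism `M ≃ M''`. -/
def fiberEquiv (I : Ideal R) (e : M ≃ₗ[A] M'') : Fiber R A I M ≃ₗ[A] Fiber R A I M'' :=
  Submodule.Quotient.equiv _ _ e (map_idealSub_of_surjective e.surjective)

variable (D : Type) [AddCommGroup D] [Module R D] [Module A D] [IsScalarTower R A D]
  {U : Type} [AddCommGroup U] [Module R U]

variable (A) in
lemma nonempty_fiber_tensor_equiv {W : Type} [AddCommGroup W] [Module R W] {q : U →ₗ[R] W}
    (hq : Function.Surjective q) (hker : LinearMap.ker q = I • ⊤) :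
    Nonempty (Fiber R A I (D ⊗[R] U) ≃ₗ[A] D ⊗[R] W) :=
  nonempty_equiv_of_ker_eq (g := TensorProduct.AlgebraTensorModule.lTensor A D q)
    (Submodule.mkQ_surjective _) (LinearMap.lTensor_surjective D hq) <| by
      ext z
      exact mkQ_idealSub_eq_zero.trans (lTensor_eq_zero_iff_mem_smul_top D hq hker z).symm

lemma exists_fiber_tensor_equiv_pi [Module.Finite R U] (hI : I.IsMaximal) :
    ∃ r, Nonempty (Fiber R A I (D ⊗[R] U) ≃ₗ[A] (Fin r → Fiber R A I D)) := by
  let _ := Ideal.Quotient.field I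
  have : Module.Finite (R ⧸ I) (U ⧸ I • (⊤ : Submodule R U)) := .of_restrictScalars_finite R _ _
  let b := Module.finBasis (R ⧸ I) (U ⧸ I • (⊤ : Submodule R U))
  obtain ⟨eU⟩ := nonempty_fiber_tensor_equiv (I := I) (U := U) A D
    (Submodule.mkQ_surjective (I • ⊤)) (Submodule.ker_mkQ _)
  obtain ⟨eR⟩ := nonempty_fiber_tensor_equiv (I := I) (U := R) (W := R ⧸ I) A D
    (q := Submodule.mkQ I) (Submodule.mkQ_surjective I)
    (by rw [Submodule.ker_mkQ, smul_eq_mul]; exact (Ideal.mul_top I).symm)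
  let eD : D ⊗[R] (R ⧸ I) ≃ₗ[A] Fiber R A I D :=
    eR.symm ≪≫ₗ fiberEquiv I (TensorProduct.AlgebraTensorModule.rid R A D)
  exact ⟨_, ⟨eU ≪≫ₗ TensorProduct.AlgebraTensorModule.congr (.refl A D)
    (b.repr.restrictScalars R) ≪≫ₗ TensorProduct.finsuppRight R A D (R ⧸ I) _ ≪≫ₗ
    Finsupp.linearEquivFunOnFinite A _ _ ≪≫ₗ LinearEquiv.piCongrRight fun _ => eD⟩⟩

end Fibers

section StandardFactors

variable {R : Type} [CommRing R] {A : Type} [Ring A] [Algebra R A] {Λ : Type}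

/-- `M ≅ Δ(l) ⊗_R U` for some `l ∈ S` and some finitely generated projective `R`-module `U`. -/
abbrev IsTensorFactor (R A : Type) [CommRing R] [Ring A] [Algebra R A] {Λ : Type} (Δ : Λ → Type)
    [∀ l, AddCommGroup (Δ l)] [∀ l, Module R (Δ l)] [∀ l, Module A (Δ l)]
    [∀ l, IsScalarTower R A (Δ l)] (S : Set Λ) (M : Type) [AddCommGroup M] [Module A M] : Prop :=
  Nonempty (TensorFactor R A Λ Δ S M)

/-- `M ≅ F(l)` for some `l ∈ S`. -/
abbrev IsPlainFactor (A : Type) [Ring A] {Λ : Type} (F : Λ → Type) [∀ l, AddCommGroup (F l)]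
    [∀ l, Module A (F l)] (S : Set Λ) (M : Type) [AddCommGroup M] [Module A M] : Prop :=
  Nonempty (PlainFactor A Λ F S M)

/-- `M ≅ Δ(l)(I)` for some `l ∈ S`. -/
abbrev IsFiberFactor (R A : Type) [CommRing R] [Ring A] {Λ : Type} (I : Ideal R)
    (Δ : Λ → Type) [∀ l, AddCommGroup (Δ l)] [∀ l, Module R (Δ l)] [∀ l, Module A (Δ l)]
    (S : Set Λ) (M : Type) [AddCommGroup M] [Module A M] : Prop :=
  IsPlainFactor A (fun l => Fiber R A I (Δ l)) S M

variable {F : Λ → Type} [∀ l, AddCommGroup (F l)] [∀ l, Module A (F l)]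
  {Δ : Λ → Type} [∀ l, AddCommGroup (Δ l)] [∀ l, Module R (Δ l)] [∀ l, Module A (Δ l)]
  [∀ l, IsScalarTower R A (Δ l)] {S T : Set Λ} {M N : Type} [AddCommGroup M] [Module A M]

lemma IsTensorFactor.mono (hST : S ⊆ T) : IsTensorFactor R A Δ S M → IsTensorFactor R A Δ T M
  | ⟨⟨l, hl, U, hfin, hproj, e⟩⟩ => ⟨⟨l, hST hl, U, hfin, hproj, e⟩⟩

lemma inFilt_iff [Module.Finite A M] :
    InFilt R A Λ Δ S M ↔ Filt (IsTensorFactor R A Δ S) M := by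
  rw [← hasChain_top_iff fun e ⟨⟨l, hl, U, hfin, hproj, e'⟩⟩ =>
    ⟨⟨l, hl, U, hfin, hproj, e.symm ≪≫ₗ e'⟩⟩]
  exact and_iff_right ‹_›

lemma inFiltPlain_iff [Module.Finite A M] :
    InFiltPlain A Λ F S M ↔ Filt (IsPlainFactor A F S) M := by
  rw [← hasChain_top_iff fun e ⟨⟨l, hl, e'⟩⟩ => ⟨⟨l, hl, e.symm ≪≫ₗ e'⟩⟩]
  exact and_iff_right ‹_›

lemma IsTensorFactor.hom_eq_zero [AddCommGroup N] [Module A N]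
    (hN : ∀ m ∈ S, ∀ f : Δ m →ₗ[A] N, f = 0) (h : IsTensorFactor R A Δ S M) (f : M →ₗ[A] N) :
    f = 0 := by
  obtain ⟨l, hl, U, -, -, e⟩ := h
  suffices hf : f ∘ₗ e.symm.toLinearMap = 0 by
    ext x
    simpa using LinearMap.congr_fun hf (e x)
  ext z
  induction z with
  | zero => simp
  | add x y hx hy => rw [map_add, hx, hy, map_add]
  | tmul d u =>
    exact LinearMap.congr_fun (hN l hl (f ∘ₗ e.symm.toLinearMap ∘ₗ
      (TensorProduct.AlgebraTensorModule.mk R A (Δ l) U).flip u)) d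

section Forward

variable [Module R M] [IsScalarTower R A M] {I : Ideal R}

lemma IsTensorFactor.projective [∀ l, Module.Projective R (Δ l)]
    (h : IsTensorFactor R A Δ S M) : Module.Projective R M := by
  obtain ⟨l, -, U, -, _, e⟩ := h
  exact .of_equiv (e.symm.restrictScalars R)

lemma IsTensorFactor.filt_fiber (hI : I.IsMaximal) (h : IsTensorFactor R A Δ S M) :
    Filt (IsFiberFactor R A I Δ S) (Fiber R A I M) := by
  obtain ⟨l, hl, U, _, -, e⟩ := h
  obtain ⟨r, ⟨e'⟩⟩ := exists_fiber_tensor_equiv_pi (A := A) (Δ l) (U := U) hI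
  have hΔ : Filt (IsFiberFactor R A I Δ S) (Fiber R A I (Δ l)) := .of ⟨⟨l, hl, .refl A _⟩⟩
  exact (hΔ.pi r).of_equiv (e'.symm ≪≫ₗ fiberEquiv I e.symm)

theorem Filt.projective_and_filt_fiber [∀ l, Module.Projective R (Δ l)]
    (h : Filt (IsTensorFactor R A Δ S) M) : Module.Projective R M ∧
      ∀ I : Ideal R, I.IsMaximal → Filt (IsFiberFactor R A I Δ S) (Fiber R A I M) := by
  refine h.induction_tower R (motive := fun M _ _ _ _ => Module.Projective R M ∧
    ∀ I : Ideal R, I.IsMaximal → Filt (IsFiberFactor R A I Δ S) (Fiber R A I M)) ?_ ?_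
  · exact fun M _ _ _ _ _ => ⟨inferInstance, fun I _ => .zero _⟩
  · rintro M' M M'' _ _ _ _ _ _ _ _ _ _ _ _ f g hf hg hfg - h'' ⟨_, hM'⟩
    have := h''.projective
    obtain ⟨e, he, -⟩ := exists_equiv_prod_of_exact (f := f.restrictScalars R)
      (g := g.restrictScalars R) hf hg hfg
    refine ⟨.of_equiv e.symm, fun I hI => ?_⟩
    have hs : (LinearMap.fst R M' M'' ∘ₗ e) ∘ₗ f.restrictScalars R = LinearMap.id := by
      ext x
      simp [he]
    exact .of_exact (fiberMap_injective_of_split hs) (fiberMap_surjective hg)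
      (fiberMap_exact hg hfg) (hM' I hI) (h''.filt_fiber hI)

end Forward

end StandardFactors

section HomSpaces

variable {R A : Type*} [CommRing R] [Ring A] [Algebra R A] {P D N N' N'' : Type*} [AddCommGroup P]
  [Module A P] [Module.Projective A P] [AddCommGroup D] [Module A D] [AddCommGroup N] [Module R N]
  [Module A N] [IsScalarTower R A N] [AddCommGroup N'] [Module R N'] [Module A N']
  [IsScalarTower R A N'] [AddCommGroup N''] [Module R N''] [Module A N''] [IsScalarTower R A N'']

lemma exact_compRight {f : N' →ₗ[A] N} {g : N →ₗ[A] N''} (hf : Function.Injective f)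
    (hfg : Function.Exact f g) :
    Function.Exact (f.compRight R : (D →ₗ[A] N') →ₗ[R] _) (g.compRight R) := fun k =>
  ⟨exists_lift_of_exact hf hfg, by
    rintro ⟨k, rfl⟩
    ext d
    exact hfg.apply_apply_eq_zero (k d)⟩

variable {π : P →ₗ[A] D}

lemma compRight_surjective_of_lcomp_surjective (hπ : Function.Surjective π)
    (hN : Function.Surjective (π.lcomp R N)) {g : N →ₗ[A] N'} (hg : Function.Surjective g) :
    Function.Surjective (g.compRight R : (D →ₗ[A] N) →ₗ[R] (D →ₗ[A] N')) := by
  intro f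
  obtain ⟨f', hf'⟩ := Module.projective_lifting_property g (f ∘ₗ π) hg
  obtain ⟨f'', rfl⟩ := hN f'
  exact ⟨f'', LinearMap.lcomp_injective_of_surjective (S := R) π hπ hf'⟩

variable [Module.Finite A P]

lemma mem_smul_top_of_lcomp_surjective (hπ : Function.Surjective π)
    (hN : Function.Surjective (π.lcomp R N)) {I : Ideal R} {f : D →ₗ[A] N}
    (hf : ∀ d, f d ∈ I • (⊤ : Submodule R N)) : f ∈ I • (⊤ : Submodule R (D →ₗ[A] N)) := by
  let e := LinearEquiv.ofBijective (π.lcomp R N)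
    ⟨LinearMap.lcomp_injective_of_surjective π hπ, hN⟩
  rw [← e.symm_apply_apply f]
  exact Submodule.smul_top_le_comap_smul_top I e.symm.toLinearMap
    (linearMap_mem_smul_top fun p => hf (π p))

end HomSpaces

section Evaluation

universe v

variable (R A : Type*) [CommRing R] [Ring A] [Algebra R A] (D : Type*) (M : Type v)
  [AddCommGroup D] [Module R D] [Module A D] [IsScalarTower R A D]
  [AddCommGroup M] [Module R M] [Module A M] [IsScalarTower R A M]

/-- The evaluation map `D ⊗ Hom_A(D, M) → M`, whose image is the trace of `D` in `M`. -/
def evalHom : D ⊗[R] (D →ₗ[A] M) →ₗ[A] M :=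
  TensorProduct.AlgebraTensorModule.lift
    { LinearMap.applyₗ' R with map_smul' := fun a d => by ext f; exact map_smul f a d }

variable {R A D M} {M' M'' : Type v}
  [AddCommGroup M'] [Module R M'] [Module A M'] [IsScalarTower R A M']
  [AddCommGroup M''] [Module R M''] [Module A M''] [IsScalarTower R A M'']

lemma evalHom_lTensor_compRight (g : M →ₗ[A] M'') (z : D ⊗[R] (D →ₗ[A] M)) :
    evalHom R A D M'' ((g.compRight R).lTensor D z) = g (evalHom R A D M z) := by
  induction z with
  | zero => simp
  | add x y hx hy => rw [map_add, map_add, hx, hy, map_add, map_add]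
  | tmul d f => rfl

lemma range_evalHom_le_comap (g : M →ₗ[A] M'') :
    LinearMap.range (evalHom R A D M) ≤ (LinearMap.range (evalHom R A D M'')).comap g := by
  rintro _ ⟨z, rfl⟩
  exact ⟨_, evalHom_lTensor_compRight g z⟩

lemma map_range_evalHom {g : M →ₗ[A] M''}
    (hlift : Function.Surjective (g.compRight R : (D →ₗ[A] M) →ₗ[R] (D →ₗ[A] M''))) :
    (LinearMap.range (evalHom R A D M)).map g = LinearMap.range (evalHom R A D M'') := by
  refine le_antisymm (Submodule.map_le_iff_le_comap.2 (range_evalHom_le_comap g)) ?_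
  rintro _ ⟨z, rfl⟩
  obtain ⟨z, rfl⟩ := LinearMap.lTensor_surjective D hlift z
  exact ⟨_, ⟨z, rfl⟩, (evalHom_lTensor_compRight g z).symm⟩

section Extension

variable {f : M' →ₗ[A] M} {g : M →ₗ[A] M''} (hf : Function.Injective f)
  (hfg : Function.Exact f g)
  (hlift : Function.Surjective (g.compRight R : (D →ₗ[A] M) →ₗ[R] (D →ₗ[A] M'')))
  (hM'' : Function.Injective (evalHom R A D M''))
include hf hfg hlift hM''

lemma exists_lTensor_compRight_eq {z : D ⊗[R] (D →ₗ[A] M)} (hz : g (evalHom R A D M z) = 0) :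
    ∃ z' : D ⊗[R] (D →ₗ[A] M'), (f.compRight R).lTensor D z' = z := by
  refine (lTensor_exact D (exact_compRight hf hfg) hlift z).1 (hM'' ?_)
  rw [evalHom_lTensor_compRight, hz, map_zero]

lemma evalHom_injective_of_exact (hM' : Function.Injective (evalHom R A D M')) :
    Function.Injective (evalHom R A D M) := by
  rw [injective_iff_map_eq_zero]
  intro z hz
  obtain ⟨z', rfl⟩ := exists_lTensor_compRight_eq hf hfg hlift hM'' (by rw [hz, map_zero])
  rw [evalHom_lTensor_compRight, map_eq_zero_iff f hf, map_eq_zero_iff _ hM'] at hz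
  rw [hz, map_zero]

lemma Filt.quotient_range_evalHom {X : ∀ (N : Type v) [AddCommGroup N] [Module A N], Prop}
    (hg : Function.Surjective g) (h' : Filt X (M' ⧸ LinearMap.range (evalHom R A D M')))
    (h'' : Filt X (M'' ⧸ LinearMap.range (evalHom R A D M''))) :
    Filt X (M ⧸ LinearMap.range (evalHom R A D M)) := by
  refine .of_exact (f := Submodule.mapQ _ _ f (range_evalHom_le_comap f))
    (g := Submodule.mapQ _ _ g (range_evalHom_le_comap g)) ?_ ?_ ?_ h' h''
  · rw [injective_iff_map_eq_zero]
    intro x hx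
    obtain ⟨x, rfl⟩ := Submodule.mkQ_surjective _ x
    obtain ⟨z, hz⟩ := (Submodule.Quotient.mk_eq_zero _).1 hx
    obtain ⟨z', rfl⟩ := exists_lTensor_compRight_eq hf hfg hlift hM''
      (by rw [hz, hfg.apply_apply_eq_zero])
    exact (Submodule.Quotient.mk_eq_zero _).2
      ⟨z', hf ((evalHom_lTensor_compRight f z').symm.trans hz)⟩
  · exact .of_comp (g := Submodule.mkQ _) ((Submodule.mkQ_surjective _).comp hg)
  · exact (hfg.exact_mapQ_iff _ _).2 (inf_le_right.trans (map_range_evalHom hlift).ge)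

end Extension

lemma evalHom_bijective_of_forall_eq_smul {I : Ideal R} {q : D →ₗ[A] M}
    (hq : Function.Surjective q) (hker : ∀ d, q d = 0 ↔ d ∈ I • (⊤ : Submodule R D))
    (h : ∀ f : D →ₗ[A] M, ∃ r : R, f = r • q) : Function.Bijective (evalHom R A D M) := by
  have hIq : ∀ r ∈ I, r • q = 0 := fun r hr => by
    ext d
    rw [LinearMap.smul_apply, ← LinearMap.map_smul_of_tower q]
    exact (hker _).2 (Submodule.smul_mem_smul hr trivial)
  have htmul (z : D ⊗[R] (D →ₗ[A] M)) : ∃ d, z = d ⊗ₜ q := by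
    induction z with
    | zero => exact ⟨0, (TensorProduct.zero_tmul _ _).symm⟩
    | add _ _ hx hy =>
      obtain ⟨⟨d, rfl⟩, ⟨d', rfl⟩⟩ := And.intro hx hy
      exact ⟨d + d', (TensorProduct.add_tmul ..).symm⟩
    | tmul d f =>
      obtain ⟨r, rfl⟩ := h f
      exact ⟨r • d, (TensorProduct.smul_tmul ..).symm⟩
  refine ⟨(injective_iff_map_eq_zero _).2 fun z hz => ?_, fun x => ?_⟩
  · obtain ⟨d, rfl⟩ := htmul z
    refine Submodule.smul_induction_on ((hker d).1 hz) (fun r hr d _ => ?_) fun d d' hd hd' => ?_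
    · rw [TensorProduct.smul_tmul, hIq r hr, TensorProduct.tmul_zero]
    · rw [TensorProduct.add_tmul, hd, hd', add_zero]
  · obtain ⟨d, rfl⟩ := hq x
    exact ⟨d ⊗ₜ q, rfl⟩

end Evaluation

section FiberEvaluation

variable {R A : Type} [CommRing R] [Ring A] [Algebra R A] {D : Type*} {M : Type}
  [AddCommGroup D] [Module R D] [Module A D] [IsScalarTower R A D]
  [AddCommGroup M] [Module R M] [Module A M] [IsScalarTower R A M] {I : Ideal R}
  (hsurj : Function.Surjective
    ((idealSub R A I M).mkQ.compRight R : (D →ₗ[A] M) →ₗ[R] (D →ₗ[A] Fiber R A I M)))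
include hsurj

lemma evalHom_fiber_quotient :
    Nonempty ((Fiber R A I M ⧸ LinearMap.range (evalHom R A D (Fiber R A I M))) ≃ₗ[A]
      Fiber R A I (M ⧸ LinearMap.range (evalHom R A D M))) := by
  refine nonempty_equiv_of_ker_eq (M := M)
    (f := (LinearMap.range (evalHom R A D (Fiber R A I M))).mkQ ∘ₗ (idealSub R A I M).mkQ)
    (g := (idealSub R A I (M ⧸ LinearMap.range (evalHom R A D M))).mkQ ∘ₗ
      (LinearMap.range (evalHom R A D M)).mkQ)
    ((Submodule.mkQ_surjective _).comp (Submodule.mkQ_surjective _))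
    ((Submodule.mkQ_surjective _).comp (Submodule.mkQ_surjective _)) ?_
  rw [LinearMap.ker_comp, LinearMap.ker_comp, Submodule.ker_mkQ, Submodule.ker_mkQ,
    ← map_range_evalHom hsurj, ← map_idealSub_of_surjective (Submodule.mkQ_surjective _),
    Submodule.comap_map_mkQ, Submodule.comap_map_mkQ, sup_comm]

lemma mem_smul_top_of_evalHom_mem (hinj : Function.Injective (evalHom R A D (Fiber R A I M)))
    (hI : ∀ f : D →ₗ[A] M, (∀ d, f d ∈ I • (⊤ : Submodule R M)) →
      f ∈ I • (⊤ : Submodule R (D →ₗ[A] M)))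
    {z : D ⊗[R] (D →ₗ[A] M)} (hz : evalHom R A D M z ∈ I • (⊤ : Submodule R M)) :
    z ∈ I • (⊤ : Submodule R (D ⊗[R] (D →ₗ[A] M))) := by
  have hker : LinearMap.ker ((idealSub R A I M).mkQ.compRight R :
      (D →ₗ[A] M) →ₗ[R] (D →ₗ[A] Fiber R A I M)) = I • ⊤ := by
    refine le_antisymm (fun f hf => hI f fun d =>
      mkQ_idealSub_eq_zero.1 (LinearMap.congr_fun hf d)) (Submodule.smul_le.2 fun r hr f _ => ?_)
    exact LinearMap.ext fun d => mkQ_idealSub_eq_zero.2 (Submodule.smul_mem_smul hr trivial)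
  refine (lTensor_eq_zero_iff_mem_smul_top D hsurj hker z).1 (hinj ?_)
  rw [evalHom_lTensor_compRight, map_zero]
  exact mkQ_idealSub_eq_zero.2 hz

end FiberEvaluation

lemma hom_eq_zero_of_forall_fiber {R A : Type} [CommRing R] [Ring A] [Algebra R A]
    {P : Type*} {M : Type} [AddCommGroup P] [Module A P] [Module.Finite A P] [Module.Projective A P]
    [AddCommGroup M] [Module R M] [Module A M] [IsScalarTower R A M] [Module.Finite R M]
    (hM : ∀ I : Ideal R, I.IsMaximal → ∀ f : P →ₗ[A] Fiber R A I M, f = 0) (f : P →ₗ[A] M) :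
    f = 0 := by
  have : Module.Finite R (P →ₗ[A] M) := finite_linearMap_of_projective
  have : Subsingleton (P →ₗ[A] M) := subsingleton_of_smul_top_eq_top (R := R) fun I hI =>
    Submodule.eq_top_iff'.2 fun f => linearMap_mem_smul_top fun p =>
      mkQ_idealSub_eq_zero.1 (LinearMap.congr_fun (hM I hI ((idealSub R A I M).mkQ ∘ₗ f)) p)
  exact Subsingleton.elim f 0

lemma subsingleton_of_forall_filt_fiber_empty {R A : Type} [CommRing R] [Ring A] [Algebra R A]
    {Λ : Type} {Δ : Λ → Type} [∀ l, AddCommGroup (Δ l)] [∀ l, Module R (Δ l)]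
    [∀ l, Module A (Δ l)]
    {M : Type} [AddCommGroup M] [Module R M] [Module A M] [IsScalarTower R A M] [Module.Finite R M]
    (hM : ∀ I : Ideal R, I.IsMaximal → Filt (IsFiberFactor R A I Δ ∅) (Fiber R A I M)) :
    Subsingleton M :=
  subsingleton_of_smul_top_eq_top fun I hI => Submodule.eq_top_iff'.2 fun x =>
    mkQ_idealSub_eq_zero.1 <| LinearMap.congr_fun ((hM I hI).hom_eq_zero_right
      (fun _ _ _ ⟨⟨_, hl, _⟩⟩ => hl.elim) LinearMap.id) ((idealSub R A I M).mkQ x)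

namespace SplitQH

variable {R : Type} [CommRing R] {A : Type} [Ring A] [Algebra R A] {Λ : Type} [PartialOrder Λ]
  {Δ : Λ → Type} [∀ l, AddCommGroup (Δ l)] [∀ l, Module R (Δ l)] [∀ l, Module A (Δ l)]
  [∀ l, IsScalarTower R A (Δ l)] (h : SplitQH R A Λ Δ) {l m : Λ} {S : Set Λ} {I : Ideal R}
include h

lemma hom_delta_eq_zero (hlm : ¬ l ≤ m) (f : Δ l →ₗ[A] Δ m) : f = 0 :=
  by_contra fun hf => hlm (h.hom_le l m ⟨f, hf⟩)

lemma exists_eq_smul_id (f : Δ l →ₗ[A] Δ l) : ∃ r : R, f = r • LinearMap.id := by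
  obtain ⟨φ⟩ := h.endIso l
  refine ⟨φ f, φ.injective ?_⟩
  change φ f = φ (φ f • (1 : Module.End A (Δ l)))
  rw [map_smul, map_one, smul_eq_mul, mul_one]

section Hom

variable {N : Type} [AddCommGroup N] [Module R N] [Module A N] [IsScalarTower R A N]

lemma lcomp_epi_surjective_of_hom_delta (hN : ∀ m, l < m → ∀ f : Δ m →ₗ[A] N, f = 0) :
    Function.Surjective ((h.epi l).lcomp R N) := by
  intro f
  have := (h.ker_filt l).1
  have hker : Filt (IsTensorFactor R A Δ {m | l < m}) (LinearMap.ker (h.epi l)) :=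
    inFilt_iff.1 (h.ker_filt l)
  exact exists_desc_of_exact (h.epi_surj l) (LinearMap.exact_subtype_ker_map _)
    (hker.hom_eq_zero_left (fun _ _ _ hY => hY.hom_eq_zero hN) (f ∘ₗ Submodule.subtype _))

lemma lcomp_epi_surjective (hN : ∀ m, l < m → ∀ f : h.P m →ₗ[A] N, f = 0) :
    Function.Surjective ((h.epi l).lcomp R N) :=
  h.lcomp_epi_surjective_of_hom_delta fun m hm f =>
    LinearMap.lcomp_injective_of_surjective (S := R) _ (h.epi_surj m) (hN m hm (f ∘ₗ h.epi m))

lemma lcomp_epi_delta_surjective (hlm : ¬ l < m) :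
    Function.Surjective ((h.epi l).lcomp R (Δ m)) :=
  h.lcomp_epi_surjective_of_hom_delta fun _ hk =>
    h.hom_delta_eq_zero fun hkm => hlm (hk.trans_le hkm)

end Hom

lemma hom_P_delta_eq_zero (hlm : ¬ l ≤ m) (f : h.P l →ₗ[A] Δ m) : f = 0 := by
  obtain ⟨f', rfl⟩ := h.lcomp_epi_delta_surjective (fun hlt => hlm hlt.le) f
  rw [h.hom_delta_eq_zero hlm f', map_zero]

section FiberFiltration

variable {V : Type} [AddCommGroup V] [Module A V]

lemma hom_P_eq_zero_of_isFiberFactor (hl : ∀ m ∈ S, ¬ l ≤ m) (hV : IsFiberFactor R A I Δ S V)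
    (f : h.P l →ₗ[A] V) : f = 0 := by
  obtain ⟨m, hm, e⟩ := hV
  have := h.P_proj l
  obtain ⟨g, hg⟩ := Module.projective_lifting_property (idealSub R A I (Δ m)).mkQ (e ∘ₗ f)
    (Submodule.mkQ_surjective _)
  rw [h.hom_P_delta_eq_zero (hl m hm) g, LinearMap.comp_zero] at hg
  ext x
  exact e.map_eq_zero_iff.1 (LinearMap.congr_fun hg x).symm

lemma hom_P_eq_zero_of_filt (hl : ∀ m ∈ S, ¬ l ≤ m) (hV : Filt (IsFiberFactor R A I Δ S) V)
    (f : h.P l →ₗ[A] V) : f = 0 :=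
  hV.hom_eq_zero_right (fun _ _ _ => h.hom_P_eq_zero_of_isFiberFactor hl) f

variable [Module R V] [IsScalarTower R A V]

lemma evalHom_bijective_of_equiv_fiber (e : V ≃ₗ[A] Fiber R A I (Δ l)) :
    Function.Bijective (evalHom R A (Δ l) V) := by
  let q : Δ l →ₗ[A] V := e.symm ∘ₗ (idealSub R A I (Δ l)).mkQ
  have hq : Function.Surjective q := e.symm.surjective.comp (Submodule.mkQ_surjective _)
  refine evalHom_bijective_of_forall_eq_smul hq
    (fun d => e.symm.map_eq_zero_iff.trans mkQ_idealSub_eq_zero) fun f => ?_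
  have := h.P_proj l
  obtain ⟨f', rfl⟩ := compRight_surjective_of_lcomp_surjective (h.epi_surj l)
    (h.lcomp_epi_delta_surjective (lt_irrefl l)) hq f
  obtain ⟨r, rfl⟩ := h.exists_eq_smul_id f'
  exact ⟨r, map_smul (q.compRight R) r LinearMap.id⟩

lemma evalHom_injective_and_filt_quotient_of_isFiberFactor (hl : ∀ m ∈ S, ¬ l < m)
    (hV : IsFiberFactor R A I Δ S V) :
    Function.Injective (evalHom R A (Δ l) V) ∧
      Filt (IsFiberFactor R A I Δ (S \ {l})) (V ⧸ LinearMap.range (evalHom R A (Δ l) V)) := by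
  obtain ⟨m, hm, e⟩ := hV
  obtain rfl | hml := eq_or_ne m l
  · obtain ⟨hinj, hsurj⟩ := h.evalHom_bijective_of_equiv_fiber (l := m) (I := I) e
    have : Subsingleton (V ⧸ LinearMap.range (evalHom R A (Δ m) V)) :=
      Submodule.Quotient.subsingleton_iff.2 (LinearMap.range_eq_top.2 hsurj)
    exact ⟨hinj, .zero _⟩
  · have hlm : ¬ l ≤ m := fun hle => hl m hm (hle.lt_of_ne hml.symm)
    have : Subsingleton (Δ l →ₗ[A] V) := subsingleton_of_forall_eq 0 fun f =>
      LinearMap.lcomp_injective_of_surjective (S := R) _ (h.epi_surj l)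
        (h.hom_P_eq_zero_of_isFiberFactor (S := {m}) (by simpa using hlm) ⟨m, rfl, e⟩ _)
    refine ⟨Function.injective_of_subsingleton _, ?_⟩
    rw [Subsingleton.elim (evalHom R A (Δ l) V) 0, LinearMap.range_zero]
    exact .of ⟨⟨m, ⟨hm, hml⟩, (Submodule.quotEquivOfEqBot ⊥ rfl) ≪≫ₗ e⟩⟩

theorem evalHom_injective_and_filt_quotient (hl : ∀ m ∈ S, ¬ l < m)
    (hV : Filt (IsFiberFactor R A I Δ S) V) :
    Function.Injective (evalHom R A (Δ l) V) ∧
      Filt (IsFiberFactor R A I Δ (S \ {l})) (V ⧸ LinearMap.range (evalHom R A (Δ l) V)) := by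
  refine Filt.induction_tower (X := IsFiberFactor R A I Δ S) R (motive := fun V _ _ _ _ =>
    Function.Injective (evalHom R A (Δ l) V) ∧
      Filt (IsFiberFactor R A I Δ (S \ {l})) (V ⧸ LinearMap.range (evalHom R A (Δ l) V))) ?_ ?_ hV
  · exact fun V _ _ _ _ _ => ⟨Function.injective_of_subsingleton _, .zero _⟩
  · rintro V' V V'' _ _ _ _ _ _ _ _ _ _ _ _ f g hf hg hfg h' h'' ⟨hinj', hfilt'⟩
    have := h.P_proj l
    have hV : Function.Surjective ((h.epi l).lcomp R V) := h.lcomp_epi_surjective fun m hm =>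
      h.hom_P_eq_zero_of_filt (fun k hk hmk => hl k hk (hm.trans_le hmk)) (.ext hf hg hfg h' h'')
    have hlift := compRight_surjective_of_lcomp_surjective (h.epi_surj l) hV hg
    obtain ⟨hinj'', hfilt''⟩ := h.evalHom_injective_and_filt_quotient_of_isFiberFactor hl h''
    exact ⟨evalHom_injective_of_exact hf hfg hlift hinj'' hinj',
      .quotient_range_evalHom hf hfg hlift hinj'' hg hfilt' hfilt''⟩

end FiberFiltration

section FiberwiseCriterion

variable {M : Type} [AddCommGroup M] [Module R M] [Module A M] [IsScalarTower R A M]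
  [Module.Finite R M]

lemma finite_and_projective_hom_delta [Module.Projective R M]
    (hM : Function.Surjective ((h.epi l).lcomp R M)) :
    Module.Finite R (Δ l →ₗ[A] M) ∧ Module.Projective R (Δ l →ₗ[A] M) := by
  have := h.P_proj
  have := h.P_fin
  let e : (Δ l →ₗ[A] M) ≃ₗ[R] (h.P l →ₗ[A] M) := .ofBijective ((h.epi l).lcomp R M)
    ⟨LinearMap.lcomp_injective_of_surjective _ (h.epi_surj l), hM⟩
  have : Module.Finite R (h.P l →ₗ[A] M) := finite_linearMap_of_projective
  have : Module.Projective R (h.P l →ₗ[A] M) := projective_linearMap_of_projective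
  exact ⟨.equiv e.symm, .of_equiv e.symm⟩

section FiberwiseFiltered

variable (hl : ∀ m ∈ S, ¬ l < m)
  (hM : ∀ I : Ideal R, I.IsMaximal → Filt (IsFiberFactor R A I Δ S) (Fiber R A I M))
include hl hM

lemma lcomp_epi_surjective_of_forall_fiber : Function.Surjective ((h.epi l).lcomp R M) :=
  have := h.P_proj
  have := h.P_fin
  h.lcomp_epi_surjective fun _ hm => hom_eq_zero_of_forall_fiber fun I hI =>
    h.hom_P_eq_zero_of_filt (fun k hk hmk => hl k hk (hm.trans_le hmk)) (hM I hI)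

theorem evalHom_injective_and_projective_quotient [Module.Projective R M] :
    Function.Injective (evalHom R A (Δ l) M) ∧
      Module.Projective R (M ⧸ LinearMap.range (evalHom R A (Δ l) M)) := by
  have := h.P_proj
  have := h.P_fin
  have := h.deltaFinR l
  have := h.deltaProjR l
  have hfactor := h.lcomp_epi_surjective_of_forall_fiber hl hM
  obtain ⟨_, _⟩ := h.finite_and_projective_hom_delta hfactor
  obtain ⟨hinj, hproj⟩ := injective_and_projective_quotient_range
    (t := (evalHom R A (Δ l) M).restrictScalars R) fun I hI z hz =>
      mem_smul_top_of_evalHom_mem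
        (compRight_surjective_of_lcomp_surjective (h.epi_surj l) hfactor
          (idealSub R A I M).mkQ_surjective)
        (h.evalHom_injective_and_filt_quotient hl (hM I hI)).1
        (fun f hf => mem_smul_top_of_lcomp_surjective (h.epi_surj l) hfactor hf) hz
  rw [LinearMap.range_restrictScalars] at hproj
  exact ⟨hinj, .of_equiv (Submodule.Quotient.restrictScalarsEquiv R _)⟩

theorem filt_fiber_quotient_range_evalHom (hI : I.IsMaximal) :
    Filt (IsFiberFactor R A I Δ (S \ {l}))
      (Fiber R A I (M ⧸ LinearMap.range (evalHom R A (Δ l) M))) := by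
  have := h.P_proj l
  obtain ⟨e⟩ := evalHom_fiber_quotient (compRight_surjective_of_lcomp_surjective (h.epi_surj l)
    (h.lcomp_epi_surjective_of_forall_fiber hl hM) (idealSub R A I M).mkQ_surjective)
  exact (h.evalHom_injective_and_filt_quotient hl (hM I hI)).2.of_equiv e

end FiberwiseFiltered

theorem filt_of_forall_fiber (hS : S.Finite) [Module.Projective R M]
    (hM : ∀ I : Ideal R, I.IsMaximal → Filt (IsFiberFactor R A I Δ S) (Fiber R A I M)) :
    Filt (IsTensorFactor R A Δ S) M := by
  classical
  lift S to Finset Λ using hS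
  induction S using Finset.strongInduction generalizing M with
  | H S ih =>
    obtain rfl | hne := S.eq_empty_or_nonempty
    · have : Subsingleton M := subsingleton_of_forall_filt_fiber_empty (by simpa using hM)
      exact .zero M
    · obtain ⟨l, hl, hmax⟩ := S.exists_maximal hne
      have hl' : ∀ m ∈ S, ¬ l < m := fun m hm hlm => hlm.not_ge (hmax hm hlm.le)
      obtain ⟨hfin, hproj⟩ :=
        h.finite_and_projective_hom_delta (h.lcomp_epi_surjective_of_forall_fiber hl' hM)
      obtain ⟨hinj, _⟩ := h.evalHom_injective_and_projective_quotient hl' hM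
      have : Module.Finite R (M ⧸ LinearMap.range (evalHom R A (Δ l) M)) := .quotient R _
      have hquot : Filt (IsTensorFactor R A Δ (S.erase l)) (M ⧸ LinearMap.range _) :=
        ih (S.erase l) (Finset.erase_ssubset hl) fun I hI => by
          rw [Finset.coe_erase]
          exact h.filt_fiber_quotient_range_evalHom hl' hM hI
      exact .of_exact hinj (Submodule.mkQ_surjective _) (LinearMap.exact_map_mkQ_range _)
        (.of ⟨⟨l, hl, .of R (Δ l →ₗ[A] M), hfin, hproj, .refl A _⟩⟩)
        (hquot.mono fun _ _ _ => IsTensorFactor.mono (Finset.coe_subset.2 (S.erase_subset l)))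

end FiberwiseCriterion

end SplitQH

theorem filtration_iff_fibers_filtered_general
    (R : Type) [CommRing R] (A : Type) [Ring A] [Algebra R A] (Λ : Type) [PartialOrder Λ]
    (Δ : Λ → Type) [∀ l, AddCommGroup (Δ l)] [∀ l, Module R (Δ l)]
    [∀ l, Module A (Δ l)] [∀ l, IsScalarTower R A (Δ l)]
    (h : SplitQH R A Λ Δ) {S : Set Λ} (hS : S.Finite)
    (M : Type) [AddCommGroup M] [Module R M] [Module A M] [IsScalarTower R A M]
    [Module.Finite A M] :
    InFilt R A Λ Δ S M ↔
      (Module.Projective R M ∧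
        ∀ 𝔪 : Ideal R, 𝔪.IsMaximal →
          InFiltPlain A Λ (fun l => Fiber R A 𝔪 (Δ l)) S (Fiber R A 𝔪 M)) := by
  have := h.deltaProjR
  have := h.algFin
  have : Module.Finite R M := .trans A M
  have (I : Ideal R) : Module.Finite A (Fiber R A I M) :=
    .of_surjective _ (Submodule.mkQ_surjective (idealSub R A I M))
  simp only [inFilt_iff, inFiltPlain_iff]
  exact ⟨Filt.projective_and_filt_fiber, fun ⟨_, hM⟩ => h.filt_of_forall_fiber hS hM⟩

/-- A finitely generated `A`-module `M` belongs to `F(Δ̃)` if and only if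
`M` is projective over `R` and, for every maximal ideal `𝔪` of `R`, the fibre `M(𝔪)` has a
filtration by the fibres `Δ(λ)(𝔪)` of the standard modules (i.e. `M(𝔪) ∈ F(Δ(𝔪))` over
`A(𝔪)`). -/
theorem filtration_iff_fibers_filtered
    (R : Type) [CommRing R] [IsNoetherianRing R]
    (A : Type) [Ring A] [Algebra R A]
    (Λ : Type) [Fintype Λ] [PartialOrder Λ]
    (Δ : Λ → Type) [∀ l, AddCommGroup (Δ l)] [∀ l, Module R (Δ l)]
    [∀ l, Module A (Δ l)] [∀ l, IsScalarTower R A (Δ l)]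
    (h : SplitQH R A Λ Δ)
    (M : Type) [AddCommGroup M] [Module R M] [Module A M] [IsScalarTower R A M]
    [Module.Finite A M] :
    InFilt R A Λ Δ Set.univ M ↔
      (Module.Projective R M ∧
        ∀ 𝔪 : Ideal R, 𝔪.IsMaximal →
          InFiltPlain A Λ (fun l => Fiber R A 𝔪 (Δ l)) Set.univ (Fiber R A 𝔪 M)) :=
  filtration_iff_fibers_filtered_general R A Λ Δ h Set.finite_univ M

end
end
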